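/- arXiv:1203.1720 — 2 statements merged into one kernel-verified Lean document; each statement's English description precedes it below -/
import Mathlib

section
/- Let B be a non-shellable triangulated 3-ball with no interior vertices (such as Rudin's ball), and let K = B ∗ σ be the join of B with a simplex σ of dimension k ≥ 2. Then K is a 2-stacked (k+4)-ball which is not shellable. -/
open Finset

variable {V : Type*} [DecidableEq V] [Fintype V]

/-- A (possibly empty) simplicial complex on the vertex set `V`,
given as its set of faces: a collection of finite subsets of `V`
closed under taking subsets. -/
def IsComplex (Δ : Set (Finset V)) : Prop :=
  ∀ F ∈ Δ, ∀ G ⊆ F, G ∈ Δ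

/-- `skc Δ i` is the complex `Δ(i) = {F ⊆ V : skelᵢ(2^F) ⊆ Δ}`:
all subsets `F` of `V` all of whose subsets of cardinality at most `i+1`
are faces of `Δ`. -/
def skc (Δ : Set (Finset V)) (i : ℕ) : Set (Finset V) :=
  {F | ∀ G ⊆ F, G.card ≤ i + 1 → G ∈ Δ}

/-- The `k`-skeleton of a complex: faces of cardinality at most `k+1`. -/
def skel (Δ : Set (Finset V)) (k : ℕ) : Set (Finset V) :=
  {F ∈ Δ | F.card ≤ k + 1}

/-- A missing face of `Δ`: a non-face all of whose proper subsets are faces. -/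
def IsMissingFace (Δ : Set (Finset V)) (F : Finset V) : Prop :=
  F ∉ Δ ∧ ∀ G ⊂ F, G ∈ Δ

/-- The link of a face. -/
def link (Δ : Set (Finset V)) (F : Finset V) : Set (Finset V) :=
  {G | Disjoint F G ∧ F ∪ G ∈ Δ}

/-- `numFacesCard Δ j` is `f_{j-1}(Δ)`, the number of faces of `Δ` of
cardinality `j`. -/
noncomputable def numFacesCard (Δ : Set (Finset V)) (j : ℕ) : ℕ :=
  {F : Finset V | F ∈ Δ ∧ F.card = j}.ncard

/-- The `h`-numbers of a `(d-1)`-dimensional complex: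
`h_i = ∑_{j=0}^{i} (-1)^{i-j} C(d-j, i-j) f_{j-1}`. -/
noncomputable def hVec (Δ : Set (Finset V)) (d i : ℕ) : ℤ :=
  ∑ j ∈ Finset.range (i + 1),
    (-1 : ℤ) ^ (i - j) * ((d - j).choose (i - j)) * (numFacesCard Δ j)

/- ### Geometric realization, shellability, joins -/

section Realization

variable {V : Type*} [Fintype V] [DecidableEq V]

/-- The geometric realization of a complex `Δ` on `V`, as a subspace of
`ℝ^V`: convex combinations of vertices supported on a face of `Δ`. -/
def realization (Δ : Set (Finset V)) : Set (V → ℝ) :=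
  {f | (∀ v, 0 ≤ f v) ∧ (∑ v, f v) = 1 ∧ ∃ F ∈ Δ, ∀ v, f v ≠ 0 → v ∈ F}

/-- `Δ` is a triangulation of the `d`-ball: its geometric realization is
homeomorphic to the closed unit ball of `ℝ^d`. -/
def IsTriangulatedBall (Δ : Set (Finset V)) (d : ℕ) : Prop :=
  IsComplex Δ ∧
  Nonempty (↥(realization Δ) ≃ₜ
    ↥(Metric.closedBall (0 : EuclideanSpace ℝ (Fin d)) 1))

/-- The boundary complex of a triangulated `d`-ball, combinatorially: all
faces contained in some `(d-1)`-dimensional face lying in exactly one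
facet. -/
def ballBoundary (Δ : Set (Finset V)) (d : ℕ) : Set (Finset V) :=
  {F | ∃ G ∈ Δ, F ⊆ G ∧ G.card = d ∧
    (∃! H, H ∈ Δ ∧ H.card = d + 1 ∧ G ⊆ H)}

/-- `L` is a shelling order of the `d`-dimensional complex `Δ`: a linear
order `F_1, …, F_t` of its facets such that each `F_i ∩ (∪_{j<i} 2^{F_j})`
is pure of dimension `d-1`. -/
def IsShelling (Δ : Set (Finset V)) (d : ℕ) (L : List (Finset V)) : Prop :=
  L.Nodup ∧ (∀ F, F ∈ L ↔ F ∈ Δ ∧ F.card = d + 1) ∧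
  ∀ i : Fin L.length, 0 < (i : ℕ) → ∀ G : Finset V,
    (G ⊆ L.get i ∧ ∃ j, j < i ∧ G ⊆ L.get j) →
    ∃ G', G' ⊆ L.get i ∧ (∃ j, j < i ∧ G' ⊆ L.get j) ∧ G ⊆ G' ∧ G'.card = d

/-- `Δ` is a shellable pure `d`-dimensional complex. -/
def IsShellable (Δ : Set (Finset V)) (d : ℕ) : Prop :=
  (∀ F ∈ Δ, ∃ H ∈ Δ, F ⊆ H ∧ H.card = d + 1) ∧ ∃ L, IsShelling Δ d L

end Realization

/-- The join of two simplicial complexes on disjoint vertex sets. -/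
def simplicialJoin {V W : Type*} [DecidableEq V] [DecidableEq W]
    (A : Set (Finset V)) (B : Set (Finset W)) : Set (Finset (V ⊕ W)) :=
  {H | ∃ F ∈ A, ∃ G ∈ B,
    H = F.map ⟨Sum.inl, Sum.inl_injective⟩ ∪ G.map ⟨Sum.inr, Sum.inr_injective⟩}

section NoRetract
open MeasureTheory Metric Set
variable {E : Type*} [NormedAddCommGroup E] [InnerProductSpace ℝ E] [FiniteDimensional ℝ E]

lemma exists_poly_det (A : E →L[ℝ] E) : ∃ p : Polynomial ℝ,
    p.natDegree ≤ Module.finrank ℝ E ∧ ∀ t : ℝ, p.eval t = (1 + t • A).det := by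
  let b := Module.finBasis ℝ E
  let M := LinearMap.toMatrix b b A
  refine ⟨Matrix.det ((Polynomial.X : Polynomial ℝ) • M.map Polynomial.C +
    (1 : Matrix _ _ ℝ).map Polynomial.C), ?_, ?_⟩
  · simpa using Polynomial.natDegree_det_X_add_C_le M 1
  · intro t
    have : (1 + t • A).det = LinearMap.det ((1 + t • A : E →L[ℝ] E) : E →ₗ[ℝ] E) := rfl
    rw [this, ← LinearMap.det_toMatrix b, ← Polynomial.coe_evalRingHom, RingHom.map_det]
    congr 1
    have h1 : ((1 + t • A : E →L[ℝ] E) : E →ₗ[ℝ] E) = 1 + t • (A : E →ₗ[ℝ] E) := rfl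
    rw [h1, map_add (LinearMap.toMatrix b b), map_smul (LinearMap.toMatrix b b), LinearMap.toMatrix_one]
    ext i j
    simp [Matrix.one_apply, M, add_comm]
    by_cases h : i = j <;> simp [h, mul_comm]

lemma lagrange_eval (n : ℕ) (v : ℕ → ℝ) (hv : Set.InjOn v (Finset.range (n+1) : Finset ℕ))
    (p : Polynomial ℝ) (hp : p.natDegree ≤ n) :
    p.eval 1 = ∑ i ∈ Finset.range (n+1), p.eval (v i) *
      (Lagrange.basis (Finset.range (n+1)) v i).eval 1 := by
  have h := Lagrange.eq_interpolate (s := Finset.range (n+1)) (f := p) hv (by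
    refine lt_of_le_of_lt Polynomial.degree_le_natDegree ?_
    simp only [Finset.card_range]
    exact_mod_cast Nat.lt_succ_of_le hp)
  conv_lhs => rw [h]
  simp [Lagrange.interpolate_apply, Polynomial.eval_finsetSum]

lemma no_retract (r : E → E) (hr : ∀ x ∈ closedBall (0:E) 1, ContDiffAt ℝ 1 r x)
    (h1 : ∀ x ∈ closedBall (0:E) 1, ‖r x‖ = 1) (h2 : ∀ x, ‖x‖ = 1 → r x = x) : False := by
  borelize E
  let μ : Measure E := volume
  let u : E → E := fun x => r x - x
  have hu : ∀ x ∈ closedBall (0:E) 1, ContDiffAt ℝ 1 u x := fun x hx =>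
    (hr x hx).sub contDiffAt_id
  have hdc : ContinuousOn (fderiv ℝ u) (closedBall 0 1) := fun x hx =>
    ((hu x hx).continuousAt_fderiv (by simp)).continuousWithinAt
  have hcpt : IsCompact (closedBall (0:E) 1) := isCompact_closedBall 0 1
  obtain ⟨C, hC⟩ := hcpt.exists_bound_of_continuousOn hdc
  have hC0 : 0 ≤ C := (norm_nonneg _).trans (hC 0 (by simp))
  have hlip : ∀ x ∈ closedBall (0:E) 1, ∀ y ∈ closedBall (0:E) 1, ‖u y - u x‖ ≤ C * ‖y - x‖ := by
    intro x hx y hy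
    exact (convex_closedBall (0:E) 1).norm_image_sub_le_of_norm_fderiv_le
      (fun z hz => (hu z hz).differentiableAt (by simp)) hC hx hy
  have hu0 : ∀ x, ‖x‖ = 1 → u x = 0 := fun x hx => by simp [u, h2 x hx]
  classical
  let U : E → E := fun x => if ‖x‖ ≤ 1 then u x else 0
  have hmix : ∀ x y : E, ‖x‖ ≤ 1 → 1 < ‖y‖ → ‖u x‖ ≤ 2 * C * ‖y - x‖ := by
    intro x y hx hy
    have hy0 : (0:ℝ) < ‖y‖ := by linarith
    let z : E := (‖y‖⁻¹) • y
    have hz : ‖z‖ = 1 := by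
      simp only [z, norm_smul, norm_inv, norm_norm]; field_simp
    have h3 := hlip z (by simp [hz]) x (by simpa using hx)
    rw [hu0 z hz, sub_zero] at h3
    have h4 : ‖y - z‖ = ‖y‖ - 1 := by
      have : y - z = (1 - ‖y‖⁻¹) • y := by simp [z, sub_smul]
      rw [this, norm_smul, Real.norm_of_nonneg]
      · field_simp
      · have := inv_le_one_of_one_le₀ hy.le
        linarith
    have h5 : ‖x - z‖ ≤ 2 * ‖y - x‖ := by
      have e : x - z = (y - z) - (y - x) := by abel
      have h6 : ‖x - z‖ ≤ ‖y - z‖ + ‖y - x‖ := by rw [e]; exact norm_sub_le _ _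
      have h7 : ‖y‖ - ‖x‖ ≤ ‖y - x‖ := norm_sub_norm_le _ _
      linarith
    nlinarith [norm_nonneg (x - z)]
  have hU : ∀ x y : E, ‖U x - U y‖ ≤ 2 * C * ‖x - y‖ := by
    intro x y
    have hn : 0 ≤ ‖x - y‖ := norm_nonneg _
    by_cases hx : ‖x‖ ≤ 1 <;> by_cases hy : ‖y‖ ≤ 1
    · simp only [U, hx, hy, if_true]
      have := hlip y (by simpa using hy) x (by simpa using hx)
      nlinarith [mul_nonneg hC0 hn]
    · simp only [U, hx, hy, if_true, if_false, sub_zero]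
      rw [norm_sub_rev x y]
      exact hmix x y hx (not_le.1 hy)
    · simp only [U, hx, hy, if_true, if_false, zero_sub, norm_neg]
      exact hmix y x hy (not_le.1 hx)
    · simp only [U, hx, hy, if_false, sub_zero, norm_zero]
      positivity
  -- determinant is positive close to the identity
  have hdetc : Continuous (fun A : E →L[ℝ] E => A.det) := ContinuousLinearMap.continuous_det
  obtain ⟨ε, hε, hdet⟩ : ∃ ε > 0, ∀ A : E →L[ℝ] E, ‖A - 1‖ < ε → 0 < A.det := by
    have h0 : ∀ᶠ A : E →L[ℝ] E in nhds 1, 0 < A.det := by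
      apply hdetc.continuousAt.eventually_const_lt
      have : (1 : E →L[ℝ] E).det = 1 := by
        change LinearMap.det (1 : E →ₗ[ℝ] E) = 1
        simp
      simp only [this]; exact one_pos
    obtain ⟨ε, hε, h⟩ := Metric.eventually_nhds_iff.1 h0
    exact ⟨ε, hε, fun A hA => h (by rwa [dist_eq_norm])⟩
  obtain ⟨t0, ht0, ht01, ht02, ht03⟩ : ∃ t0 : ℝ, 0 < t0 ∧ t0 < 1 ∧ 2 * C * t0 < 1 ∧ C * t0 < ε := by
    have hev : ∀ᶠ t in nhdsWithin (0:ℝ) (Ioi 0), 0 < t ∧ t < 1 ∧ 2 * C * t < 1 ∧ C * t < ε := by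
      have e1 : ∀ᶠ t in nhds (0:ℝ), t < 1 := continuousAt_id.eventually_lt_const (by simp)
      have e2 : ∀ᶠ t in nhds (0:ℝ), 2 * C * t < 1 :=
        (by fun_prop : Continuous fun t : ℝ => 2 * C * t).continuousAt.eventually_lt_const (by simp)
      have e3 : ∀ᶠ t in nhds (0:ℝ), C * t < ε :=
        (by fun_prop : Continuous fun t : ℝ => C * t).continuousAt.eventually_lt_const (by simpa)
      filter_upwards [self_mem_nhdsWithin, e1.filter_mono nhdsWithin_le_nhds,
        e2.filter_mono nhdsWithin_le_nhds, e3.filter_mono nhdsWithin_le_nhds] with t a b c d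
      exact ⟨a, b, c, d⟩
    exact hev.exists
  have hint : ∀ t : ℝ, IntegrableOn (fun x => (1 + t • fderiv ℝ u x).det) (ball 0 1) μ := by
    intro t
    refine IntegrableOn.mono_set ?_ ball_subset_closedBall
    apply ContinuousOn.integrableOn_compact hcpt
    exact hdetc.comp_continuousOn (continuousOn_const.add (hdc.const_smul t))
  have hvol : ∀ t : ℝ, 0 ≤ t → t ≤ t0 →
      ∫ x in ball 0 1, (1 + t • fderiv ℝ u x).det ∂μ = μ.real (ball 0 1) := by
    intro t ht htt
    let F : E → E := fun x => x + t • U x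
    have happ : ApproximatesLinearOn F ((ContinuousLinearEquiv.refl ℝ E : E ≃L[ℝ] E) : E →L[ℝ] E)
        univ (Real.toNNReal (2 * C * t)) := by
      intro x _ y _
      rw [Real.coe_toNNReal _ (by positivity)]
      have : F x - F y - ((ContinuousLinearEquiv.refl ℝ E : E ≃L[ℝ] E) : E →L[ℝ] E) (x - y)
          = t • (U x - U y) := by
        simp only [F, ContinuousLinearEquiv.coe_refl, ContinuousLinearMap.coe_id', id, smul_sub]
        abel
      rw [this, norm_smul, Real.norm_of_nonneg ht]
      calc t * ‖U x - U y‖ ≤ t * (2 * C * ‖x - y‖) := by gcongr; exact hU x y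
        _ = _ := by ring
    have hcc : Subsingleton E ∨ Real.toNNReal (2 * C * t) <
        ‖(((ContinuousLinearEquiv.refl ℝ E : E ≃L[ℝ] E).symm : E ≃L[ℝ] E) : E →L[ℝ] E)‖₊⁻¹ := by
      rcases subsingleton_or_nontrivial E with h | h
      · exact Or.inl h
      · right
        have : ‖(((ContinuousLinearEquiv.refl ℝ E : E ≃L[ℝ] E).symm : E ≃L[ℝ] E) : E →L[ℝ] E)‖₊ = 1 := by
          ext
          simp
        rw [this, inv_one, Real.toNNReal_lt_one]
        nlinarith
    have hinj : Function.Injective F := by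
      have := happ.injOn hcc
      exact injOn_univ.1 this
    have hsurj : Function.Surjective F := happ.surjective hcc
    have hFball : ∀ x ∈ ball (0:E) 1, F x = (1 - t) • x + t • r x := by
      intro x hx
      have : ‖x‖ ≤ 1 := by simpa using (ball_subset_closedBall hx)
      simp only [F, U, this, if_true, u, smul_sub, sub_smul, one_smul]
      abel
    have himg : F '' ball 0 1 = ball 0 1 := by
      apply Set.Subset.antisymm
      · rintro _ ⟨x, hx, rfl⟩
        rw [hFball x hx, mem_ball_zero_iff]
        have hx' : ‖x‖ < 1 := by simpa using hx
        calc _ ≤ ‖(1 - t) • x‖ + ‖t • r x‖ := norm_add_le _ _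
          _ = (1 - t) * ‖x‖ + t := by
            rw [norm_smul, norm_smul, h1 x (ball_subset_closedBall hx), Real.norm_of_nonneg ht,
              Real.norm_of_nonneg (by linarith), mul_one]
          _ < 1 := by nlinarith
      · intro y hy
        obtain ⟨x, rfl⟩ := hsurj y
        refine ⟨x, ?_, rfl⟩
        by_contra hx
        have hx' : 1 ≤ ‖x‖ := by simpa using hx
        have hFx : F x = x := by
          rcases hx'.eq_or_lt with h | h
          · simp [F, U, hu0 x h.symm]
          · simp [F, U, not_le.2 h]
        rw [hFx] at hy
        exact hx hy
    have hder : ∀ x ∈ ball (0:E) 1, HasFDerivWithinAt F (1 + t • fderiv ℝ u x) (ball 0 1) x := by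
      intro x hx
      have hux := ((hu x (ball_subset_closedBall hx)).differentiableAt (by simp)).hasFDerivAt
      have h3 : HasFDerivAt (fun x => x + t • u x) (1 + t • fderiv ℝ u x) x :=
        (hasFDerivAt_id x).add (hux.const_smul t)
      refine h3.hasFDerivWithinAt.congr (fun y hy => ?_) ?_
      · have : ‖y‖ ≤ 1 := by simpa using (ball_subset_closedBall hy)
        simp [F, U, this]
      · have : ‖x‖ ≤ 1 := by simpa using (ball_subset_closedBall hx)
        simp [F, U, this]
    have key := integral_image_eq_integral_abs_det_fderiv_smul μ measurableSet_ball hder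
      hinj.injOn (fun _ => (1:ℝ))
    rw [himg] at key
    have h5 : ∫ x in ball 0 1, (1 + t • fderiv ℝ u x).det ∂μ =
        ∫ x in ball 0 1, |(1 + t • fderiv ℝ u x).det| • (1:ℝ) ∂μ := by
      apply setIntegral_congr_fun measurableSet_ball
      intro x hx
      have : 0 < (1 + t • fderiv ℝ u x).det := by
        apply hdet
        rw [add_sub_cancel_left, norm_smul, Real.norm_of_nonneg ht]
        have := hC x (ball_subset_closedBall hx)
        calc t * ‖fderiv ℝ u x‖ ≤ t0 * C := by gcongr
          _ < ε := by linarith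
      simp [abs_of_pos this]
    rw [h5, ← key]
    simp
  have hzero : ∀ x ∈ ball (0:E) 1, (1 + (1:ℝ) • fderiv ℝ u x).det = 0 := by
    intro x hx
    have hx' := ball_subset_closedBall hx
    have hdr := ((hr x hx').differentiableAt (by simp)).hasFDerivAt
    have e : 1 + (1:ℝ) • fderiv ℝ u x = fderiv ℝ r x := by
      have : HasFDerivAt u (fderiv ℝ r x - 1) x := hdr.sub (hasFDerivAt_id x)
      rw [this.fderiv]; simp
    rw [e]
    by_contra hne
    have hsur : Function.Surjective (fderiv ℝ r x) := by
      have : IsUnit (LinearMap.det (fderiv ℝ r x : E →ₗ[ℝ] E)) := isUnit_iff_ne_zero.2 hne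
      have := LinearMap.equivOfDetNeZero (fderiv ℝ r x : E →ₗ[ℝ] E) hne
      exact (LinearMap.range_eq_top.1 (LinearMap.range_eq_top.2
        ((LinearMap.equivOfDetNeZero (fderiv ℝ r x : E →ₗ[ℝ] E) hne).surjective)))
    obtain ⟨w, hw⟩ := hsur (r x)
    have h3 : HasFDerivAt (fun y => inner ℝ (r y) (r y)) (0 : E →L[ℝ] ℝ) x := by
      have : (fun y => inner ℝ (r y) (r y)) =ᶠ[nhds x] fun _ => (1:ℝ) := by
        filter_upwards [isOpen_ball.mem_nhds hx] with y hy
        rw [real_inner_self_eq_norm_sq, h1 y (ball_subset_closedBall hy)]; norm_num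
      exact (hasFDerivAt_const (1:ℝ) x).congr_of_eventuallyEq this
    have h4 := (hdr.inner ℝ hdr).unique h3
    have h5 := congrArg (fun L : E →L[ℝ] ℝ => L w) h4
    simp [hw, h1 x hx'] at h5
  -- interpolation
  let n := Module.finrank ℝ E
  let v : ℕ → ℝ := fun i => t0 * (i / (n + 1 : ℝ))
  have hv : Set.InjOn v (Finset.range (n+1) : Finset ℕ) := by
    intro i _ j _ hij
    have hn : (n + 1 : ℝ) ≠ 0 := by positivity
    simp only [v] at hij
    have := mul_left_cancel₀ ht0.ne' hij
    field_simp at this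
    exact_mod_cast this
  let L : ℕ → ℝ := fun i => (Lagrange.basis (Finset.range (n+1)) v i).eval 1
  have hL1 : ∑ i ∈ Finset.range (n+1), L i = 1 := by
    have := lagrange_eval n v hv 1 (by simp)
    simpa using this.symm
  have hLd : ∀ x, (1 + (1:ℝ) • fderiv ℝ u x).det =
      ∑ i ∈ Finset.range (n+1), (1 + v i • fderiv ℝ u x).det * L i := by
    intro x
    obtain ⟨p, hp, hpe⟩ := exists_poly_det (fderiv ℝ u x)
    have := lagrange_eval n v hv p hp
    simpa only [hpe] using this
  have hI : ∫ x in ball 0 1, (1 + (1:ℝ) • fderiv ℝ u x).det ∂μ = μ.real (ball 0 1) := by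
    simp_rw [hLd]
    rw [integral_finsetSum _ (fun i _ => (hint (v i)).mul_const _)]
    simp_rw [integral_mul_const]
    rw [Finset.sum_congr rfl (fun i hi => ?_), ← Finset.mul_sum, hL1, mul_one]
    rw [hvol (v i) (by positivity) ?_]
    have hin : (i:ℝ) ≤ n + 1 := by exact_mod_cast (Finset.mem_range.1 hi).le
    have : (i:ℝ) / (n+1) ≤ 1 := by rw [div_le_one (by positivity)]; exact hin
    simp only [v]; nlinarith
  rw [setIntegral_congr_fun measurableSet_ball hzero] at hI
  simp only [integral_zero] at hI
  have hpos : 0 < μ.real (ball (0:E) 1) := by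
    rw [measureReal_def]
    exact ENNReal.toReal_pos (measure_ball_pos μ 0 one_pos).ne' measure_ball_lt_top.ne
  linarith
end NoRetract

section NoEmbed
open MeasureTheory Metric Set
variable {E : Type*} [NormedAddCommGroup E] [InnerProductSpace ℝ E] [FiniteDimensional ℝ E]

lemma no_field (v : E → E) (hv : ContDiff ℝ 1 v) (h0 : ∀ x ∈ closedBall (0:E) 1, v x ≠ 0)
    (h1 : ∀ x, ‖x‖ = 1 → 0 < inner ℝ x (v x)) : False := by
  let D : E → ℝ := fun x => (inner ℝ x (v x))^2 + ‖v x‖^2 * (1 - ‖x‖^2)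
  have hD : ∀ x ∈ closedBall (0:E) 1, 0 < D x := by
    intro x hx
    have hx' : ‖x‖ ≤ 1 := by simpa using hx
    have hp : 0 < ‖v x‖^2 := by have := norm_pos_iff.2 (h0 x hx); positivity
    rcases hx'.eq_or_lt with h | h
    · have := h1 x h
      simp only [D, h]; norm_num; positivity
    · have : 0 < 1 - ‖x‖^2 := by nlinarith [norm_nonneg x]
      simp only [D]; positivity
  let s : E → ℝ := fun x => (- inner ℝ x (v x) + Real.sqrt (D x)) / ‖v x‖^2
  refine no_retract (fun x => x + s x • v x) ?_ ?_ ?_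
  · intro x hx
    have hDc : ContDiffAt ℝ 1 D x := by
      have h3 : ContDiff ℝ 1 (fun x : E => inner ℝ x (v x)) := contDiff_id.inner ℝ hv
      have h4 : ContDiff ℝ 1 (fun x => ‖v x‖^2) := hv.norm_sq ℝ
      have h5 : ContDiff ℝ 1 (fun x : E => ‖x‖^2) := contDiff_id.norm_sq ℝ
      exact ((h3.pow 2).add (h4.mul (contDiff_const.sub h5))).contDiffAt
    have hs : ContDiffAt ℝ 1 s x := by
      have h3 : ContDiff ℝ 1 (fun x : E => inner ℝ x (v x)) := contDiff_id.inner ℝ hv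
      have h4 : ContDiff ℝ 1 (fun x => ‖v x‖^2) := hv.norm_sq ℝ
      refine ContDiffAt.div (h3.neg.contDiffAt.add (hDc.sqrt (hD x hx).ne')) h4.contDiffAt ?_
      have := norm_pos_iff.2 (h0 x hx); positivity
    exact contDiffAt_id.add (hs.smul hv.contDiffAt)
  · intro x hx
    have hp := norm_pos_iff.2 (h0 x hx)
    have e : ‖x + s x • v x‖^2 = 1 := by
      rw [norm_add_sq_real, norm_smul, inner_smul_right, mul_pow, Real.norm_eq_abs, sq_abs]
      have h3 : s x * ‖v x‖^2 + inner ℝ x (v x) = Real.sqrt (D x) := by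
        simp only [s]; field_simp; ring
      have h4 : (s x * ‖v x‖^2 + inner ℝ x (v x))^2 = D x := by
        rw [h3, Real.sq_sqrt (hD x hx).le]
      simp only [D] at h4
      have h6 : ‖v x‖^2 * (‖x‖^2 + 2 * (s x * inner ℝ x (v x)) + s x ^2 * ‖v x‖^2 - 1) = 0 := by
        linear_combination h4
      rcases mul_eq_zero.1 h6 with h | h
      · exact absurd h (by positivity)
      · linarith
    have := norm_nonneg (x + s x • v x)
    nlinarith
  · intro x hx
    have : s x = 0 := by
      simp only [s, D, hx]
      norm_num
      left
      rw [Real.sqrt_sq (h1 x hx).le]; ring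
    simp [this]

variable {F : Type*} [NormedAddCommGroup F] [InnerProductSpace ℝ F] [FiniteDimensional ℝ F]

/-- no continuous injection of a ball into a space of smaller dimension -/
lemma no_embed (hd : Module.finrank ℝ F < Module.finrank ℝ E)
    (f : closedBall (0:E) 1 → F) (hf : Continuous f) (hinj : Function.Injective f) : False := by
  have hcs : CompactSpace (closedBall (0:E) 1) := isCompact_iff_compactSpace.1 (isCompact_closedBall 0 1)
  have hemb : Topology.IsClosedEmbedding f := hf.isClosedEmbedding hinj
  -- extension of the inverse
  have hcl : IsClosed (closedBall (0:E) 1) := isClosed_closedBall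
  obtain ⟨g, hg⟩ := ContinuousMap.exists_extension hemb
    (⟨fun x => WithLp.ofLp ((stdOrthonormalBasis ℝ E).repr x.1), by fun_prop⟩ : C(closedBall (0:E) 1, Fin (Module.finrank ℝ E) → ℝ))
  obtain ⟨f', hf'⟩ := ContinuousMap.exists_extension hcl.isClosedEmbedding_subtypeVal
    (⟨fun x => WithLp.ofLp ((stdOrthonormalBasis ℝ F).repr (f x)), by fun_prop⟩ : C(closedBall (0:E) 1, Fin (Module.finrank ℝ F) → ℝ))
  let G : F → E := fun y => (stdOrthonormalBasis ℝ E).repr.symm (WithLp.toLp 2 (g y))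
  let f₁ : E → F := fun y => (stdOrthonormalBasis ℝ F).repr.symm (WithLp.toLp 2 (f' y))
  have hGc : Continuous G := by fun_prop
  have hf₁c : Continuous f₁ := by fun_prop
  have hG : ∀ x : closedBall (0:E) 1, G (f x) = x := by
    intro x
    have := congrArg (fun h => h x) hg
    simp at this
    simp [G, this]
  have hf₁ : ∀ x : closedBall (0:E) 1, f₁ x = f x := by
    intro x
    have := congrArg (fun h => h x) hf'
    simp at this
    simp [f₁, this]
  obtain ⟨P, hP, hPG, -⟩ := hGc.exists_contDiff_approx 1 (ε := fun _ => 1/8) continuous_const (by norm_num)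
  -- P is uniformly continuous near the image
  have hK : IsCompact (f₁ '' closedBall 0 1) := (isCompact_closedBall 0 1).image hf₁c
  have huc := hK.cthickening (r := 1) |>.uniformContinuousOn_of_continuous (f := P) hP.continuous.continuousOn
  obtain ⟨δ, hδ, hPδ⟩ := Metric.uniformContinuousOn_iff.1 huc (1/8) (by norm_num)
  obtain ⟨Q, hQ, hQf, -⟩ := hf₁c.exists_contDiff_approx 1 (ε := fun _ => min δ 1) continuous_const
    (fun _ => lt_min hδ one_pos)
  obtain ⟨c, hc, hcn⟩ : ∃ c ∈ (range P)ᶜ, dist c 0 < 1/8 := by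
    have := ContDiff.dense_compl_range_of_finrank_lt_finrank hP hd
    obtain ⟨c, hc, hc2⟩ := this.exists_dist_lt 0 (ε := 1/8) (by norm_num)
    exact ⟨c, hc, by rwa [dist_comm]⟩
  have hclose : ∀ x ∈ closedBall (0:E) 1, ‖P (Q x) - c - x‖ < 1 := by
    intro x hx
    have a1 : dist (P (Q x)) (P (f₁ x)) < 1/8 := by
      have hq := hQf x
      refine hPδ _ ?_ _ ?_ (hq.trans_le (min_le_left _ _))
      · exact mem_cthickening_of_dist_le _ _ _ _ (mem_image_of_mem _ hx) (hq.le.trans (min_le_right _ _))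
      · exact self_subset_cthickening _ (mem_image_of_mem _ hx)
    have a2 := hPG (f₁ x)
    have a3 : G (f₁ x) = x := by
      have := hf₁ ⟨x, hx⟩
      simp only at this
      rw [this, hG ⟨x, hx⟩]
    rw [a3] at a2
    have a4 : ‖c‖ < 1/8 := by simpa using hcn
    have e : P (Q x) - c - x = (P (Q x) - P (f₁ x)) + (P (f₁ x) - x) - c := by abel
    rw [dist_eq_norm] at a1 a2
    rw [e]
    calc _ ≤ ‖P (Q x) - P (f₁ x)‖ + ‖P (f₁ x) - x‖ + ‖c‖ :=
          (norm_sub_le _ _).trans (by gcongr; exact norm_add_le _ _)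
      _ < 1 := by linarith
  refine no_field (fun x => P (Q x) - c) ?_ ?_ ?_
  · exact (ContDiff.comp hP hQ).sub contDiff_const
  · intro x hx h
    exact hc ⟨Q x, sub_eq_zero.1 h⟩
  · intro x hx
    have h3 := hclose x (by simp [hx])
    have e : P (Q x) - c = x + (P (Q x) - c - x) := by abel
    rw [e, inner_add_right, real_inner_self_eq_norm_sq, hx]
    have := abs_real_inner_le_norm x (P (Q x) - c - x)
    rw [hx, one_mul] at this
    have := (abs_le.1 this).1
    linarith
end NoEmbed

section Comb
open Finset

variable {V W : Type*} [DecidableEq V] [DecidableEq W]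

lemma disjSum_subset_iff (F : Finset V) (G : Finset W) (H : Finset (V ⊕ W)) :
    F.disjSum G ⊆ H ↔ F ⊆ H.toLeft ∧ G ⊆ H.toRight := by
  constructor
  · intro h
    exact ⟨fun x hx => by simpa using h (by simpa using hx), fun x hx => by simpa using h (by simpa using hx)⟩
  · rintro ⟨h1, h2⟩ x hx
    rcases x with x | x
    · simpa using h1 (by simpa using hx)
    · simpa using h2 (by simpa using hx)

lemma disjSum_lr (H : Finset (V ⊕ W)) : H.toLeft.disjSum H.toRight = H := by
  ext x; rcases x with x | x <;> simp

lemma mem_join_iff (B : Set (Finset V)) (H : Finset (V ⊕ W)) :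
    H ∈ simplicialJoin B (Set.univ : Set (Finset W)) ↔ H.toLeft ∈ B := by
  constructor
  · rintro ⟨F, hF, G, -, rfl⟩
    convert hF using 1
    ext x; simp
  · intro h
    refine ⟨_, h, H.toRight, trivial, ?_⟩
    ext x; rcases x with x | x <;> simp

lemma join_isComplex {B : Set (Finset V)} (hB : IsComplex B) :
    IsComplex (simplicialJoin B (Set.univ : Set (Finset W))) := by
  intro F hF G hG
  rw [mem_join_iff] at *
  exact hB _ hF _ (fun x hx => by
    simp only [mem_toLeft] at *; exact hG hx)

variable [Fintype V] [Fintype W]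

lemma comb_stacked (B : Set (Finset V)) (k : ℕ) (hW : Fintype.card W = k + 1)
    (hle : ∀ F ∈ B, F.card ≤ 4) (hpure : ∀ F ∈ B, ∃ H ∈ B, F ⊆ H ∧ H.card = 4)
    (hc : IsComplex B)
    (hnoint : ∀ F ∈ B, F.card = 1 → F ∈ ballBoundary B 3) :
    (∀ F ∈ simplicialJoin B (Set.univ : Set (Finset W)),
      F ∉ ballBoundary (simplicialJoin B (Set.univ : Set (Finset W))) (k + 4) →
        k + 3 ≤ F.card) := by
  intro F hF hnb
  by_contra hcard
  apply hnb
  rw [mem_join_iff] at hF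
  have hsum := F.card_toLeft_add_card_toRight
  by_cases h2 : F.toRight = univ
  · rw [h2, card_univ, hW] at hsum
    obtain ⟨v, hv, hFv⟩ : ∃ v, {v} ∈ B ∧ F.toLeft ⊆ {v} := by
      rcases F.toLeft.eq_empty_or_nonempty with h | ⟨v, hv⟩
      · obtain ⟨H, hH, -, hH4⟩ := hpure _ hF
        obtain ⟨v, hv⟩ := card_pos.1 (by omega : 0 < H.card)
        exact ⟨v, hc _ hH _ (by simpa using hv), by simp [h]⟩
      · refine ⟨v, hc _ hF _ (by simpa using hv), ?_⟩
        have : F.toLeft.card ≤ 1 := by omega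
        intro x hx
        simpa using card_le_one.1 this x hx v hv
    obtain ⟨G, hG, hvG, hG3, H, ⟨hH, hH4, hGH⟩, huniq⟩ := hnoint _ hv (by simp)
    refine ⟨G.disjSum univ, by rw [mem_join_iff]; simpa using hG, ?_, ?_, H.disjSum univ, ⟨?_, ?_, ?_⟩, ?_⟩
    · rw [← disjSum_lr F, disjSum_subset_iff]; simpa using hFv.trans hvG
    · simp [hG3, hW]; omega
    · rw [mem_join_iff]; simpa using hH
    · simp [hH4, hW]; omega
    · rw [disjSum_subset_iff]; simpa using hGH
    · rintro H' ⟨hH', hc', hs'⟩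
      rw [disjSum_subset_iff] at hs'
      rw [mem_join_iff] at hH'
      have hr : H'.toRight = univ := univ_subset_iff.1 hs'.2
      have := H'.card_toLeft_add_card_toRight
      rw [hr, card_univ, hW] at this
      rw [← disjSum_lr H', hr, huniq _ ⟨hH', by omega, hs'.1⟩]
  · obtain ⟨w, hw⟩ : ∃ w, w ∉ F.toRight := by
      by_contra h; push Not at h; exact h2 (eq_univ_iff_forall.2 h)
    obtain ⟨H, hH, hFH, hH4⟩ := hpure _ hF
    refine ⟨H.disjSum (univ.erase w), by rw [mem_join_iff]; simpa using hH, ?_, ?_, H.disjSum univ, ⟨?_, ?_, ?_⟩, ?_⟩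
    · rw [← disjSum_lr F, disjSum_subset_iff]
      simp only [toLeft_disjSum, toRight_disjSum]
      refine ⟨hFH, fun x hx => ?_⟩
      simp only [mem_erase, mem_univ, and_true]
      rintro rfl; exact hw hx
    · simp [hH4, hW, card_erase_of_mem]; omega
    · rw [mem_join_iff]; simpa using hH
    · simp [hH4, hW]; omega
    · rw [disjSum_subset_iff]; simp
    · rintro H' ⟨hH', hc', hs'⟩
      rw [disjSum_subset_iff] at hs'
      rw [mem_join_iff] at hH'
      have hl : H = H'.toLeft := eq_of_subset_of_card_le hs'.1 (by rw [hH4]; exact hle _ hH')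
      have := H'.card_toLeft_add_card_toRight
      have hr : H'.toRight = univ := by
        apply eq_univ_of_card
        rw [hW]; rw [← hl] at this; omega
      rw [← disjSum_lr H', hr, ← hl]

lemma comb_shell (B : Set (Finset V)) (k : ℕ) (hW : Fintype.card W = k + 1)
    (hle : ∀ F ∈ B, F.card ≤ 4) (hpure : ∀ F ∈ B, ∃ H ∈ B, F ⊆ H ∧ H.card = 4)
    (hs : IsShellable (simplicialJoin B (Set.univ : Set (Finset W))) (k + 4)) :
    IsShellable B 3 := by
  obtain ⟨-, L, hnd, hmem, hsh⟩ := hs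
  have key : ∀ H ∈ L, H.toLeft ∈ B ∧ H.toLeft.card = 4 ∧ H.toRight = univ := by
    intro H hH
    obtain ⟨h1, h2⟩ := (hmem H).1 hH
    rw [mem_join_iff] at h1
    have := H.card_toLeft_add_card_toRight
    have h3 := hle _ h1
    have h4 : H.toRight.card ≤ k + 1 := hW ▸ card_le_univ _
    refine ⟨h1, by omega, eq_univ_of_card _ (by omega)⟩
  have hlen : (L.map Finset.toLeft).length = L.length := by simp
  refine ⟨hpure, L.map Finset.toLeft, ?_, ?_, ?_⟩
  · refine (List.nodup_map_iff_inj_on hnd).2 ?_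
    intro x hx y hy hxy
    rw [← disjSum_lr x, ← disjSum_lr y, hxy, (key x hx).2.2, (key y hy).2.2]
  · intro F
    rw [List.mem_map]
    constructor
    · rintro ⟨H, hH, rfl⟩
      exact ⟨(key H hH).1, (key H hH).2.1⟩
    · rintro ⟨h1, h2⟩
      refine ⟨F.disjSum univ, (hmem _).2 ⟨by rw [mem_join_iff]; simpa using h1, ?_⟩, by simp⟩
      simp [h2, hW]; omega
  · rintro ⟨i, hi⟩ hi0 G ⟨hGi, ⟨j, hj'⟩, hj, hGj⟩
    have hi' : i < L.length := by simpa using hi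
    have hj'' : j < L.length := by simpa using hj'
    simp only [List.get_eq_getElem, List.getElem_map] at hGi hGj
    obtain ⟨G', h1, ⟨⟨l, hl'⟩, hl, h2⟩, h3, h4⟩ := hsh ⟨i, hi'⟩ hi0 (G.disjSum univ) ⟨by
        rw [disjSum_subset_iff]; exact ⟨hGi, by rw [List.get_eq_getElem, (key _ (List.getElem_mem _)).2.2]⟩,
        ⟨j, hj''⟩, hj, by
        rw [disjSum_subset_iff]; exact ⟨hGj, by rw [List.get_eq_getElem, (key _ (List.getElem_mem _)).2.2]⟩⟩
    rw [disjSum_subset_iff] at h3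
    have hr : G'.toRight = univ := univ_subset_iff.1 h3.2
    have := G'.card_toLeft_add_card_toRight
    rw [hr, card_univ, hW] at this
    refine ⟨G'.toLeft, ?_, ⟨⟨l, by simpa using hl'⟩, hl, ?_⟩, h3.1, by omega⟩
    · simp only [List.get_eq_getElem, List.getElem_map]
      intro x hx; simp only [mem_toLeft] at *; exact h1 hx
    · simp only [List.get_eq_getElem, List.getElem_map]
      intro x hx; simp only [mem_toLeft] at *; exact h2 hx

end Comb

section Top
open Metric

lemma simplex_homeo_ball {ι : Type*} [Fintype ι] (d : ℕ) (hι : Fintype.card ι = d + 1) :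
    Nonempty (stdSimplex ℝ ι ≃ₜ closedBall (0 : EuclideanSpace ℝ (Fin d)) 1) := by
  obtain ⟨b⟩ := AffineBasis.exists_affineBasis_of_finiteDimensional (k := ℝ)
    (P := EuclideanSpace ℝ (Fin d)) (ι := ι) (by simpa using hι)
  let s : Set (EuclideanSpace ℝ (Fin d)) := convexHull ℝ (Set.range b)
  have hs : s = {x | ∀ i, 0 ≤ b.coord i x} := b.convexHull_eq_nonneg_coord
  have hcs : IsCompact s := (Set.finite_range b).isCompact_convexHull (𝕜 := ℝ)
  obtain ⟨h, -, h2, -⟩ := exists_homeomorph_image_interior_closure_frontier_eq_unitBall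
    (convex_convexHull ℝ (Set.range b)) ⟨_, b.centroid_mem_interior_convexHull⟩ hcs.isBounded
  rw [hcs.isClosed.closure_eq] at h2
  have e1 : s ≃ₜ closedBall (0 : EuclideanSpace ℝ (Fin d)) 1 :=
    (h.image s).trans (Homeomorph.setCongr h2)
  have : CompactSpace s := isCompact_iff_compactSpace.1 hcs
  let e0 : s ≃ stdSimplex ℝ ι :=
    Equiv.ofBijective (fun x => ⟨fun i => b.coord i x.1, by
      exact hs.subset x.2, b.sum_coord_apply_eq_one _⟩) (by
      constructor
      · rintro ⟨x, hx⟩ ⟨y, hy⟩ hxy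
        apply Subtype.ext
        exact b.ext_elem fun i => congrFun (congrArg Subtype.val hxy) i
      · rintro ⟨w, hw0, hw1⟩
        have hc : ∀ i, b.coord i (Finset.univ.affineCombination ℝ b w) = w i := fun i =>
          b.coord_apply_combination_of_mem (Finset.mem_univ i) hw1
        refine ⟨⟨Finset.univ.affineCombination ℝ b w, ?_⟩, ?_⟩
        · rw [hs]; intro i; rw [hc]; exact hw0 i
        · apply Subtype.ext; funext i; exact hc i)
  have hc0 : Continuous e0 := by
    refine Continuous.subtype_mk (continuous_pi fun i => ?_) _
    exact (b.coord i).continuous_of_finiteDimensional.comp continuous_subtype_val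
  exact ⟨(hc0.homeoOfEquivCompactToT2 (f := e0)).symm.trans e1⟩

variable {V : Type*} [Fintype V] [DecidableEq V]

lemma card_le_of_ball (B : Set (Finset V)) (d : ℕ) (h : IsTriangulatedBall B d) :
    ∀ F ∈ B, F.card ≤ d + 1 := by
  intro F hF
  by_contra hlt
  obtain ⟨hc, ⟨φ⟩⟩ := h
  obtain ⟨F', hF', hcard⟩ := Finset.exists_subset_card_eq (s := F) (n := (d + 1) + 1) (by omega)
  obtain ⟨ψ⟩ := simplex_homeo_ball (ι := F') (d + 1) (by simpa using hcard)
  let ext : stdSimplex ℝ F' → realization B := fun f =>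
    ⟨fun v => if hv : v ∈ F' then f.1 ⟨v, hv⟩ else 0, by
      refine ⟨fun v => ?_, ?_, F, hF, fun v hv => ?_⟩
      · dsimp only; split_ifs
        · exact f.2.1 _
        · exact le_rfl
      · rw [← f.2.2, Finset.sum_dite]
        simp only [Finset.sum_const_zero, add_zero]
        refine Finset.sum_bij (fun x _ => ⟨x.1, by simpa using x.2⟩) ?_ ?_ ?_ ?_
        · simp
        · rintro ⟨a, ha⟩ _ ⟨b, hb⟩ _ hab
          simpa using hab
        · rintro ⟨b, hb⟩ _
          exact ⟨⟨b, by simpa using hb⟩, by simp, rfl⟩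
        · intro a _; rfl
      · by_contra hvF
        have : v ∉ F' := fun h => hvF (hF' h)
        simp [this] at hv⟩
  have hext : Continuous ext := by
    refine Continuous.subtype_mk (continuous_pi fun v => ?_) _
    by_cases hv : v ∈ F'
    · simp only [hv, dif_pos]
      exact (continuous_apply _).comp continuous_subtype_val
    · simp only [hv, dif_neg, not_false_eq_true]; exact continuous_const
  have hinj : Function.Injective ext := by
    intro f g hfg
    apply Subtype.ext
    funext ⟨v, hv⟩
    have := congrFun (congrArg Subtype.val hfg) v
    simpa [ext, hv] using this
  refine no_embed (E := EuclideanSpace ℝ (Fin (d+1))) (F := EuclideanSpace ℝ (Fin d)) (by simp)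
    (fun x => (φ (ext (ψ.symm x))).1) ?_ ?_
  · exact continuous_subtype_val.comp (φ.continuous.comp (hext.comp ψ.symm.continuous))
  · exact Subtype.val_injective.comp (φ.injective.comp (hinj.comp ψ.symm.injective))

lemma card_of_maximal (B : Set (Finset V)) (d : ℕ) (h : IsTriangulatedBall B d)
    (F : Finset V) (hF : F ∈ B) (hmax : ∀ G ∈ B, F ⊆ G → G = F) : d + 1 ≤ F.card := by
  by_contra hlt
  obtain ⟨hc, ⟨φ⟩⟩ := h
  have hFne : F.Nonempty := by
    by_contra hne
    rw [Finset.not_nonempty_iff_eq_empty] at hne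
    obtain ⟨f, h0, h1, G, hG, hfG⟩ := φ.symm ⟨0, by simp⟩
    have hGF := hmax G hG (by simp [hne])
    have : ∀ v, f v = 0 := by
      intro v
      by_contra hv
      have := hfG v hv
      rw [hGF, hne] at this
      simp at this
    simp [this] at h1
  obtain ⟨v0, hv0⟩ := hFne
  have hsupp : ∀ f : realization B, (∀ v ∈ F, 0 < f.1 v) → ∀ v, v ∉ F → f.1 v = 0 := by
    rintro ⟨f, h0, h1, G, hG, hfG⟩ hpos v hv
    have hGF := hmax G hG (fun v hv => hfG v (hpos v hv).ne')
    by_contra hne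
    exact hv (hGF ▸ hfG v hne)
  let O : Set (realization B) := {f | ∀ v ∈ F, 0 < f.1 v}
  have hO : IsOpen O := by
    have : O = ⋂ v ∈ F, {f : realization B | 0 < f.1 v} := by ext; simp [O]
    rw [this]
    exact isOpen_biInter_finset fun v _ => isOpen_lt continuous_const
      ((continuous_apply v).comp continuous_subtype_val)
  have hOne : O.Nonempty := by
    have hcp : (0:ℝ) < F.card := by exact_mod_cast Finset.card_pos.2 ⟨v0, hv0⟩
    refine ⟨⟨fun v => if v ∈ F then (F.card : ℝ)⁻¹ else 0, ?_, ?_, F, hF, ?_⟩, ?_⟩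
    · intro v; dsimp only; split_ifs <;> positivity
    · simp; field_simp
    · intro v hv; by_contra h; simp [h] at hv
    · intro v hv; simp [hv]; exact ⟨v0, hv0⟩
  -- a small ball in the preimage
  have hO' : IsOpen (φ.symm ⁻¹' O) := hO.preimage φ.symm.continuous
  obtain ⟨U, hU, hUO⟩ := isOpen_induced_iff.1 hO'
  obtain ⟨f, hf⟩ := hOne
  have hp : (φ f).1 ∈ U := by
    have : φ f ∈ φ.symm ⁻¹' O := by simpa using hf
    rw [← hUO] at this; exact this
  have hpc : (φ f).1 ∈ closure (ball (0 : EuclideanSpace ℝ (Fin d)) 1) := by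
    rw [closure_ball _ one_ne_zero]; exact (φ f).2
  obtain ⟨q, hqU, hqb⟩ := mem_closure_iff.1 hpc U hU hp
  obtain ⟨ε, hε, hεU⟩ := Metric.nhds_basis_closedBall.mem_iff.1
    ((hU.inter isOpen_ball).mem_nhds ⟨hqU, hqb⟩)
  have hin : ∀ x : closedBall (0 : EuclideanSpace ℝ (Fin d)) 1, q + ε • x.1 ∈ U ∩ ball 0 1 := by
    intro x
    apply hεU
    have : ‖x.1‖ ≤ 1 := mem_closedBall_zero_iff.1 x.2
    simp only [mem_closedBall, dist_self_add_left, norm_smul, Real.norm_of_nonneg hε.le]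
    nlinarith
  let ι : closedBall (0 : EuclideanSpace ℝ (Fin d)) 1 → closedBall (0 : EuclideanSpace ℝ (Fin d)) 1 :=
    fun x => ⟨q + ε • x.1, ball_subset_closedBall (hin x).2⟩
  have hιc : Continuous ι := by
    refine Continuous.subtype_mk ?_ _
    fun_prop
  have hιi : Function.Injective ι := by
    intro x y hxy
    have := congrArg Subtype.val hxy
    simp only [ι, add_right_inj] at this
    exact Subtype.ext (smul_right_injective _ hε.ne' this)
  have hιO : ∀ x, φ.symm (ι x) ∈ O := by
    intro x
    have : ι x ∈ φ.symm ⁻¹' O := by rw [← hUO]; exact (hin x).1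
    exact this
  refine no_embed (E := EuclideanSpace ℝ (Fin d)) (F := EuclideanSpace ℝ (F.erase v0)) ?_
    (fun x => WithLp.toLp 2 (fun v => (φ.symm (ι x)).1 v.1)) ?_ ?_
  · rw [finrank_euclideanSpace, finrank_euclideanSpace, Fintype.card_coe, Fintype.card_fin,
      Finset.card_erase_of_mem hv0]
    have := Finset.card_pos.2 ⟨v0, hv0⟩
    omega
  · have h1 : Continuous fun x => (φ.symm (ι x)).1 :=
      continuous_subtype_val.comp (φ.symm.continuous.comp hιc)
    exact (PiLp.continuous_toLp 2 _).comp (continuous_pi fun v => (continuous_apply v.1).comp h1)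
  · intro x y hxy
    apply hιi
    apply φ.symm.injective
    apply Subtype.ext
    have hE : ∀ v ∈ F.erase v0, (φ.symm (ι x)).1 v = (φ.symm (ι y)).1 v := fun v hv => by
      have := congrFun (congrArg WithLp.ofLp hxy) ⟨v, hv⟩
      exact this
    have hne : ∀ v, v ≠ v0 → (φ.symm (ι x)).1 v = (φ.symm (ι y)).1 v := by
      intro v hv
      by_cases hvF : v ∈ F
      · exact hE v (Finset.mem_erase.2 ⟨hv, hvF⟩)
      · rw [hsupp _ (hιO x) v hvF, hsupp _ (hιO y) v hvF]
    funext v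
    by_cases hv : v = v0
    · subst hv
      have s1 := (φ.symm (ι x)).2.2.1
      have s2 := (φ.symm (ι y)).2.2.1
      rw [← Finset.add_sum_erase _ _ (Finset.mem_univ v)] at s1 s2
      rw [Finset.sum_congr rfl (fun w hw => hne w (Finset.mem_erase.1 hw).1)] at s1
      linarith
    · exact hne v hv

lemma pure_of_ball (B : Set (Finset V)) (d : ℕ) (h : IsTriangulatedBall B d) :
    ∀ F ∈ B, ∃ H ∈ B, F ⊆ H ∧ H.card = d + 1 := by
  intro F hF
  obtain ⟨H, hFH, hH⟩ := (Set.toFinite B).exists_le_maximal hF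
  refine ⟨H, hH.prop, hFH, le_antisymm (card_le_of_ball B d h H hH.prop) ?_⟩
  exact card_of_maximal B d h H hH.prop fun G hG hHG => (hH.eq_of_le hG hHG).symm

end Top

section JoinTop
open Metric

variable {V V' W : Type*} [Fintype V] [DecidableEq V] [Fintype V'] [DecidableEq V']
  [Fintype W] [DecidableEq W]

/-- mass of the left part -/
def leftMass (f : V ⊕ W → ℝ) : ℝ := ∑ v, f (Sum.inl v)

noncomputable def joinMap (Φ : (V → ℝ) → (V' → ℝ)) (f : V ⊕ W → ℝ) : V' ⊕ W → ℝ :=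
  Sum.elim (leftMass f • Φ ((leftMass f)⁻¹ • fun v => f (Sum.inl v))) (fun w => f (Sum.inr w))

lemma real_join_iff (A : Set (Finset V)) (f : V ⊕ W → ℝ) :
    f ∈ realization (simplicialJoin A (Set.univ : Set (Finset W))) ↔
    (∀ x, 0 ≤ f x) ∧ leftMass f + ∑ w, f (Sum.inr w) = 1 ∧
      ∃ F ∈ A, ∀ v, f (Sum.inl v) ≠ 0 → v ∈ F := by
  constructor
  · rintro ⟨h0, h1, H, hH, hf⟩
    rw [mem_join_iff] at hH
    rw [Fintype.sum_sum_type] at h1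
    exact ⟨h0, h1, _, hH, fun v hv => by simpa using hf _ hv⟩
  · rintro ⟨h0, h1, F, hF, hf⟩
    refine ⟨h0, by rw [Fintype.sum_sum_type]; exact h1, F.disjSum Finset.univ, ?_, ?_⟩
    · rw [mem_join_iff]; simpa using hF
    · rintro (v | w) hv
      · simpa using hf v hv
      · simp

lemma leftMass_nonneg {f : V ⊕ W → ℝ} (h : ∀ x, 0 ≤ f x) : 0 ≤ leftMass f :=
  Finset.sum_nonneg fun _ _ => h _

lemma normalized_mem {A : Set (Finset V)} {f : V ⊕ W → ℝ}
    (hf : f ∈ realization (simplicialJoin A (Set.univ : Set (Finset W)))) (ht : leftMass f ≠ 0) :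
    ((leftMass f)⁻¹ • fun v => f (Sum.inl v)) ∈ realization A := by
  rw [real_join_iff] at hf
  obtain ⟨h0, h1, F, hF, hs⟩ := hf
  have := leftMass_nonneg h0
  refine ⟨fun v => ?_, ?_, F, hF, fun v hv => hs v ?_⟩
  · have := h0 (Sum.inl v)
    simp only [Pi.smul_apply, smul_eq_mul]; positivity
  · simp only [Pi.smul_apply, smul_eq_mul]
    rw [← Finset.mul_sum]; exact inv_mul_cancel₀ ht
  · intro h; simp [h] at hv

lemma leftMass_joinMap {A : Set (Finset V)} {A' : Set (Finset V')} {Φ : (V → ℝ) → (V' → ℝ)}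
    (hΦ : Set.MapsTo Φ (realization A) (realization A')) {f : V ⊕ W → ℝ}
    (hf : f ∈ realization (simplicialJoin A (Set.univ : Set (Finset W)))) :
    leftMass (joinMap Φ f) = leftMass f := by
  by_cases ht : leftMass f = 0
  · simp [leftMass, joinMap] at *; simp [ht]
  · have := (hΦ (normalized_mem hf ht)).2.1
    conv_lhs => unfold leftMass
    simp only [joinMap, Sum.elim_inl, Pi.smul_apply, smul_eq_mul]
    rw [← Finset.mul_sum]
    simp only [Pi.smul_def, smul_eq_mul] at this
    simp only [Pi.smul_def, smul_eq_mul]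
    rw [this, mul_one]

lemma joinMap_mapsTo {A : Set (Finset V)} {A' : Set (Finset V')} (hA' : ∅ ∈ A')
    {Φ : (V → ℝ) → (V' → ℝ)} (hΦ : Set.MapsTo Φ (realization A) (realization A')) :
    Set.MapsTo (joinMap (W := W) Φ) (realization (simplicialJoin A (Set.univ : Set (Finset W))))
      (realization (simplicialJoin A' (Set.univ : Set (Finset W)))) := by
  intro f hf
  have hm := leftMass_joinMap hΦ hf
  have hf' := hf
  rw [real_join_iff] at hf' ⊢
  obtain ⟨h0, h1, -⟩ := hf'
  have ht0 := leftMass_nonneg h0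
  refine ⟨?_, ?_, ?_⟩
  · rintro (v | w)
    · by_cases ht : leftMass f = 0
      · simp [joinMap, ht]
      · exact mul_nonneg ht0 ((hΦ (normalized_mem hf ht)).1 v)
    · exact h0 _
  · rw [hm]; exact h1
  · by_cases ht : leftMass f = 0
    · exact ⟨∅, hA', fun v hv => by simp [joinMap, ht] at hv⟩
    · obtain ⟨-, -, F, hF, hs⟩ := hΦ (normalized_mem hf ht)
      refine ⟨F, hF, fun v hv => hs v fun h => hv ?_⟩
      simp only [joinMap, Sum.elim_inl]
      rw [Pi.smul_apply, h, smul_zero]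

lemma joinMap_leftInv {A : Set (Finset V)} {A' : Set (Finset V')}
    {Φ : (V → ℝ) → (V' → ℝ)} {Ψ : (V' → ℝ) → (V → ℝ)}
    (hΦ : Set.MapsTo Φ (realization A) (realization A'))
    (hinv : ∀ x ∈ realization A, Ψ (Φ x) = x) {f : V ⊕ W → ℝ}
    (hf : f ∈ realization (simplicialJoin A (Set.univ : Set (Finset W)))) :
    joinMap Ψ (joinMap Φ f) = f := by
  have hm := leftMass_joinMap hΦ hf
  funext x
  rcases x with v | w
  · change (leftMass (joinMap Φ f) • Ψ ((leftMass (joinMap Φ f))⁻¹ • fun v => joinMap Φ f (Sum.inl v))) v = _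
    rw [hm]
    by_cases ht : leftMass f = 0
    · have h0 := ((real_join_iff A f).1 hf).1
      have := (Finset.sum_eq_zero_iff_of_nonneg (fun v _ => h0 (Sum.inl v))).1 ht v (Finset.mem_univ _)
      simp [ht, this]
    · have e : ((leftMass f)⁻¹ • fun v => joinMap Φ f (Sum.inl v)) =
          Φ ((leftMass f)⁻¹ • fun v => f (Sum.inl v)) := by
        change (leftMass f)⁻¹ • (leftMass f • Φ ((leftMass f)⁻¹ • fun v => f (Sum.inl v))) = _
        rw [smul_smul, inv_mul_cancel₀ ht, one_smul]
      rw [e, hinv _ (normalized_mem hf ht), smul_smul, mul_inv_cancel₀ ht, one_smul]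
  · rfl

lemma leftMass_continuous : Continuous (leftMass : (V ⊕ W → ℝ) → ℝ) := by
  unfold leftMass; fun_prop

lemma joinMap_continuousOn {A : Set (Finset V)} {A' : Set (Finset V')}
    {Φ : (V → ℝ) → (V' → ℝ)} (hΦ : Set.MapsTo Φ (realization A) (realization A'))
    (hc : ContinuousOn Φ (realization A)) :
    ContinuousOn (joinMap (W := W) Φ)
      (realization (simplicialJoin A (Set.univ : Set (Finset W)))) := by
  rw [continuousOn_pi]
  rintro (v | w)
  · intro f hf
    have hmc : ContinuousWithinAt (leftMass : (V ⊕ W → ℝ) → ℝ)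
      (realization (simplicialJoin A (Set.univ : Set (Finset W)))) f :=
      leftMass_continuous.continuousWithinAt
    by_cases ht : leftMass f = 0
    · have hval : joinMap Φ f (Sum.inl v) = 0 := by simp [joinMap, ht]
      change Filter.Tendsto (fun y => joinMap Φ y (Sum.inl v)) _ (nhds (joinMap Φ f (Sum.inl v)))
      rw [hval]
      have hmc' : Filter.Tendsto leftMass (nhdsWithin f
        (realization (simplicialJoin A (Set.univ : Set (Finset W))))) (nhds 0) := by
        rw [← ht]; exact hmc
      have hb : ∀ g ∈ realization (simplicialJoin A (Set.univ : Set (Finset W))),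
          0 ≤ joinMap Φ g (Sum.inl v) ∧ joinMap Φ g (Sum.inl v) ≤ leftMass g := by
        intro g hg
        have g0 := leftMass_nonneg ((real_join_iff A g).1 hg).1
        by_cases hgt : leftMass g = 0
        · simp [joinMap, hgt]
        · obtain ⟨a0, a1, -⟩ := hΦ (normalized_mem hg hgt)
          have := Finset.single_le_sum (fun i _ => a0 i) (Finset.mem_univ v)
          rw [a1] at this
          refine ⟨mul_nonneg g0 (a0 v), ?_⟩
          change leftMass g * _ ≤ _
          exact mul_le_of_le_one_right g0 this
      refine tendsto_of_tendsto_of_tendsto_of_le_of_le' tendsto_const_nhds hmc' ?_ ?_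
      · filter_upwards [self_mem_nhdsWithin] with g hg using (hb g hg).1
      · filter_upwards [self_mem_nhdsWithin] with g hg using (hb g hg).2
    · have hopen : {g : V ⊕ W → ℝ | leftMass g ≠ 0} ∈ nhds f :=
        (isOpen_ne_fun leftMass_continuous continuous_const).mem_nhds ht
      rw [← continuousWithinAt_inter hopen]
      have h1 : ContinuousWithinAt (fun g : V ⊕ W → ℝ => (leftMass g)⁻¹ • fun v => g (Sum.inl v))
          (realization (simplicialJoin A (Set.univ : Set (Finset W))) ∩ {g | leftMass g ≠ 0}) f :=
        ((hmc.mono Set.inter_subset_left).inv₀ ht).smul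
          (by fun_prop : Continuous fun g : V ⊕ W → ℝ => fun v => g (Sum.inl v)).continuousWithinAt
      have h2 : ContinuousWithinAt
          (fun g : V ⊕ W → ℝ => Φ ((leftMass g)⁻¹ • fun v => g (Sum.inl v)))
          (realization (simplicialJoin A (Set.univ : Set (Finset W))) ∩ {g | leftMass g ≠ 0}) f :=
        ContinuousWithinAt.comp (g := Φ)
          (f := fun g : V ⊕ W → ℝ => (leftMass g)⁻¹ • fun v => g (Sum.inl v))
          (hc _ (normalized_mem hf ht)) h1 (fun g hg => normalized_mem hg.1 hg.2)
      have h3 := (hmc.mono (Set.inter_subset_left (t := {g | leftMass g ≠ 0}))).smul h2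
      exact (continuous_apply v).continuousAt.comp_continuousWithinAt h3
  · exact (continuous_apply _).continuousOn

lemma join_homeo {A : Set (Finset V)} {A' : Set (Finset V')} (hA : ∅ ∈ A) (hA' : ∅ ∈ A')
    (φ : realization A ≃ₜ realization A') :
    Nonempty (realization (simplicialJoin A (Set.univ : Set (Finset W))) ≃ₜ
      realization (simplicialJoin A' (Set.univ : Set (Finset W)))) := by
  classical
  let Φ : (V → ℝ) → (V' → ℝ) := fun x => if h : x ∈ realization A then (φ ⟨x, h⟩).1 else 0
  let Ψ : (V' → ℝ) → (V → ℝ) := fun x => if h : x ∈ realization A' then (φ.symm ⟨x, h⟩).1 else 0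
  have hΦe : ∀ x : realization A, Φ x.1 = (φ x).1 := fun x => by simp [Φ]
  have hΨe : ∀ x : realization A', Ψ x.1 = (φ.symm x).1 := fun x => by simp [Ψ]
  have hΦ : Set.MapsTo Φ (realization A) (realization A') := fun x hx => by
    rw [hΦe ⟨x, hx⟩]; exact (φ _).2
  have hΨ : Set.MapsTo Ψ (realization A') (realization A) := fun x hx => by
    rw [hΨe ⟨x, hx⟩]; exact (φ.symm _).2
  have hΦc : ContinuousOn Φ (realization A) := by
    rw [continuousOn_iff_continuous_domRestrict]
    exact (continuous_subtype_val.comp φ.continuous).congr fun x => (hΦe x).symm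
  have hΨc : ContinuousOn Ψ (realization A') := by
    rw [continuousOn_iff_continuous_domRestrict]
    exact (continuous_subtype_val.comp φ.symm.continuous).congr fun x => (hΨe x).symm
  have i1 : ∀ x ∈ realization A, Ψ (Φ x) = x := fun x hx => by
    rw [hΦe ⟨x, hx⟩, hΨe]; simp
  have i2 : ∀ x ∈ realization A', Φ (Ψ x) = x := fun x hx => by
    rw [hΨe ⟨x, hx⟩, hΦe]; simp
  have m1 := joinMap_mapsTo (W := W) hA' hΦ
  have m2 := joinMap_mapsTo (W := W) hA hΨ
  exact ⟨{
    toFun := fun f => ⟨joinMap Φ f.1, m1 f.2⟩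
    invFun := fun f => ⟨joinMap Ψ f.1, m2 f.2⟩
    left_inv := fun f => Subtype.ext (joinMap_leftInv hΦ i1 f.2)
    right_inv := fun f => Subtype.ext (joinMap_leftInv hΨ i2 f.2)
    continuous_toFun := Continuous.subtype_mk
      (continuousOn_iff_continuous_domRestrict.1 (joinMap_continuousOn hΦ hΦc)) _
    continuous_invFun := Continuous.subtype_mk
      (continuousOn_iff_continuous_domRestrict.1 (joinMap_continuousOn hΨ hΨc)) _ }⟩

lemma realization_univ : realization (Set.univ : Set (Finset V)) = stdSimplex ℝ V := by
  ext f
  constructor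
  · rintro ⟨h0, h1, -⟩; exact ⟨h0, h1⟩
  · rintro ⟨h0, h1⟩; exact ⟨h0, h1, Finset.univ, trivial, fun _ _ => Finset.mem_univ _⟩

lemma join_univ : simplicialJoin (Set.univ : Set (Finset V)) (Set.univ : Set (Finset W)) =
    Set.univ := by
  ext H; rw [mem_join_iff]; simp

lemma join_ball (B : Set (Finset V)) (d k : ℕ) (hW : Fintype.card W = k + 1)
    (hball : IsTriangulatedBall B d) :
    IsTriangulatedBall (simplicialJoin B (Set.univ : Set (Finset W))) (d + k + 1) := by
  refine ⟨join_isComplex hball.1, ?_⟩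
  obtain ⟨hc, ⟨φ⟩⟩ := hball
  have hB : ∅ ∈ B := by
    obtain ⟨-, -, F, hF, -⟩ := (φ.symm ⟨0, by simp⟩).2
    exact hc F hF _ (by simp)
  obtain ⟨ψ⟩ := simplex_homeo_ball (ι := Fin (d+1)) d (by simp)
  obtain ⟨χ⟩ := simplex_homeo_ball (ι := Fin (d+1) ⊕ W) (d + k + 1) (by simp [hW]; omega)
  obtain ⟨e⟩ := join_homeo (W := W) hB (A' := (Set.univ : Set (Finset (Fin (d+1))))) trivial
    (φ.trans (ψ.symm.trans (Homeomorph.setCongr realization_univ.symm)))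
  exact ⟨e.trans ((Homeomorph.setCongr (by rw [join_univ, realization_univ])).trans χ)⟩

end JoinTop

/-- Let `B` be a non-shellable triangulated `3`-ball with
no interior vertices (such as Rudin's ball), and let `K = B ∗ σ` be the join
of `B` with a (full) simplex `σ` of dimension `k ≥ 2` (on a vertex set `W`
of cardinality `k+1`). Then `K` is a `2`-stacked `(k+4)`-ball (it has no
interior faces of dimension at most `k+1`) which is not shellable. -/
theorem join_with_simplex_stacked_not_shellable
    {V W : Type*} [Fintype V] [DecidableEq V] [Fintype W] [DecidableEq W]
    (B : Set (Finset V)) (k : ℕ) (hk : 2 ≤ k) (hW : Fintype.card W = k + 1)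
    (hball : IsTriangulatedBall B 3)
    (hnotshell : ¬ IsShellable B 3)
    (hnoint : ∀ F ∈ B, F.card = 1 → F ∈ ballBoundary B 3) :
    IsTriangulatedBall (simplicialJoin B (Set.univ : Set (Finset W))) (k + 4) ∧
    (∀ F ∈ simplicialJoin B (Set.univ : Set (Finset W)),
      F ∉ ballBoundary (simplicialJoin B (Set.univ : Set (Finset W))) (k + 4) →
        k + 3 ≤ F.card) ∧
    ¬ IsShellable (simplicialJoin B (Set.univ : Set (Finset W))) (k + 4) := by
  have h1 := card_le_of_ball B 3 hball
  have h2 := pure_of_ball B 3 hball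
  refine ⟨?_, comb_stacked B k hW h1 h2 hball.1 hnoint,
    fun hs => hnotshell (comb_shell B k hW h1 h2 hs)⟩
  have h3 := join_ball B 3 k hW hball
  have e : 3 + k + 1 = k + 4 := by omega
  rwa [e] at h3
end

section
/- Let Δ be a simplicial (d−1)-sphere (or any simplicial complex embeddable in S^{d−1}) and r ≤ d/2. Then dim Δ(d−r) ≤ d. Equivalently, Δ(d−r) contains no face of cardinality d+2. -/
open Finset

variable {V : Type*} [DecidableEq V] [Fintype V]

namespace BU
open MvPolynomial

/-- Finite-dimensional odd modules produce real points. -/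
theorem exists_algHom_of_odd {A : Type*} [CommRing A] [Algebra ℝ A] (n : ℕ) :
    ∀ (M : Type) [AddCommGroup M] [Module ℝ M] [Module A M] [IsScalarTower ℝ A M]
      [FiniteDimensional ℝ M], Module.finrank ℝ M = n → Odd n → Nonempty (A →ₐ[ℝ] ℝ) := by
  induction n using Nat.strong_induction_on with
  | _ n ih =>
  intro M _ _ _ _ _ hn hodd
  have hnt : Nontrivial M := by
    apply Module.nontrivial_of_finrank_pos (R := ℝ)
    rw [hn]; exact hodd.pos
  by_cases hs : IsSimpleModule A M
  · obtain ⟨I, hI, ⟨e⟩⟩ := isSimpleModule_iff_quot_maximal.mp hs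
    let _ : Field (A ⧸ I) := Ideal.Quotient.field I
    let e' : M ≃ₗ[ℝ] (A ⧸ I) := e.restrictScalars ℝ
    have hfd : FiniteDimensional ℝ (A ⧸ I) := LinearEquiv.finiteDimensional e'
    have hf : Module.finrank ℝ (A ⧸ I) = n := by rw [← e'.finrank_eq, hn]
    have hsurj : Function.Surjective (algebraMap ℝ (A ⧸ I)) := by
      intro x
      have hx : IsIntegral ℝ x := Algebra.IsIntegral.isIntegral x
      have h1 := minpoly.degree_dvd hx
      rw [hf] at h1
      have h2 := (minpoly.irreducible hx).degree_le_two
      have h3 : (minpoly ℝ x).natDegree ≤ 2 := Polynomial.natDegree_le_of_degree_le h2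
      have h4 : Odd (minpoly ℝ x).natDegree := Odd.of_dvd_nat hodd h1
      have h5 : (minpoly ℝ x).natDegree = 1 := by
        rcases h4 with ⟨k, hk⟩; omega
      have h6 : (minpoly ℝ x).degree = 1 := by
        exact_mod_cast (Polynomial.degree_eq_iff_natDegree_eq_of_pos (n := 1) one_pos).mpr h5
      exact minpoly.mem_range_of_degree_eq_one ℝ x h6
    let f : ℝ ≃ₐ[ℝ] (A ⧸ I) := AlgEquiv.ofBijective (Algebra.ofId ℝ (A ⧸ I))
      ⟨(algebraMap ℝ (A ⧸ I)).injective, hsurj⟩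
    exact ⟨(f.symm : (A ⧸ I) →ₐ[ℝ] ℝ).comp (Ideal.Quotient.mkₐ ℝ I)⟩
  · have : ∃ N : Submodule A M, N ≠ ⊥ ∧ N ≠ ⊤ := by
      by_contra hcon
      push Not at hcon
      apply hs
      rw [isSimpleModule_iff]
      exact { eq_bot_or_eq_top := fun N => by
                by_cases h : N = ⊥
                · exact Or.inl h
                · exact Or.inr (hcon N h) }
    obtain ⟨N, hN0, hN1⟩ := this
    let N' : Submodule ℝ M := N.restrictScalars ℝ
    have hsum := Submodule.finrank_quotient_add_finrank N'
    have hlt : Module.finrank ℝ N' < n := by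
      rw [← hn]; apply Submodule.finrank_lt
      simpa [N'] using hN1
    have hpos : 0 < Module.finrank ℝ N' := by
      rw [Nat.pos_iff_ne_zero, Ne, Submodule.finrank_eq_zero]
      simpa [N'] using hN0
    let eq := Submodule.Quotient.restrictScalarsEquiv ℝ N
    have hq := eq.finrank_eq
    have hfd : FiniteDimensional ℝ (M ⧸ N) := LinearEquiv.finiteDimensional eq
    by_cases ho : Odd (Module.finrank ℝ N')
    · let _ : Module A N' := inferInstanceAs (Module A N)
      have hst : IsScalarTower ℝ A N' := ⟨fun a b x => Subtype.ext (smul_assoc a b (x : M))⟩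
      exact ih _ hlt N' rfl ho
    · have hq' : Module.finrank ℝ (M ⧸ N) = n - Module.finrank ℝ N' := by
        have hq2 : Module.finrank ℝ (M ⧸ N') = Module.finrank ℝ (M ⧸ N) := hq
        omega
      refine ih _ (by omega) (M ⧸ N) hq' ?_
      rw [Nat.not_odd_iff_even] at ho
      exact Nat.Odd.sub_even hlt.le hodd ho

/-- image of a monomial -/
noncomputable def phiMon {R : Type*} [CommRing R] {m : ℕ} (F : Fin m → MvPolynomial (Fin m) R)
    (D : ℕ) (c : Fin m →₀ ℕ) : MvPolynomial (Fin m) R :=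
  (∏ i, F i ^ (c i / D)) * ∏ i, X i ^ (c i % D)

theorem phiMon_small {R : Type*} [CommRing R] {m : ℕ} (F : Fin m → MvPolynomial (Fin m) R)
    (D : ℕ) (c : Fin m →₀ ℕ) (hc : ∀ i, c i < D) : phiMon F D c = monomial c 1 := by
  unfold phiMon
  simp only [Nat.div_eq_of_lt (hc _), Nat.mod_eq_of_lt (hc _), pow_zero, Finset.prod_const_one,
    one_mul]
  rw [MvPolynomial.monomial_eq, Finsupp.prod_fintype _ _ (by simp)]
  simp

theorem phiMon_id {R : Type*} [CommRing R] {m : ℕ} 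
    (D : ℕ) (c : Fin m →₀ ℕ) : phiMon (R := R) (fun i => X i ^ D) D c = monomial c 1 := by
  unfold phiMon
  rw [MvPolynomial.monomial_eq, Finsupp.prod_fintype _ _ (by simp), ← Finset.prod_mul_distrib]
  simp only [← pow_mul, ← pow_add, Nat.div_add_mod, map_one, one_mul]

theorem phiMon_add {R : Type*} [CommRing R] {m : ℕ} (F : Fin m → MvPolynomial (Fin m) R)
    (D : ℕ) (hD : 0 < D) (c : Fin m →₀ ℕ) (i : Fin m) :
    phiMon F D (Finsupp.single i D + c) = F i * phiMon F D c := by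
  unfold phiMon
  have h1 : ∀ j, (Finsupp.single i D + c) j % D = c j % D := by
    intro j
    by_cases h : i = j
    · subst h; simp
    · simp [h]
  have h2 : ∀ j, F j ^ ((Finsupp.single i D + c) j / D)
      = (if i = j then F i else 1) * F j ^ (c j / D) := by
    intro j
    by_cases h : i = j
    · subst h
      simp [Nat.add_div_left _ hD, pow_succ, mul_comm]
    · simp [h]
  simp only [h1, h2, Finset.prod_mul_distrib, Finset.prod_ite_eq, Finset.mem_univ, if_true]
  ring

theorem phiMon_totalDegree {R : Type*} [CommRing R] [Nontrivial R] {m : ℕ}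
    (F : Fin m → MvPolynomial (Fin m) R)
    (D : ℕ) (hF : ∀ i, (F i).totalDegree ≤ D) (c : Fin m →₀ ℕ) :
    (phiMon F D c).totalDegree ≤ ∑ i, c i := by
  unfold phiMon
  refine (totalDegree_mul _ _).trans ?_
  have h1 : (∏ i, F i ^ (c i / D)).totalDegree ≤ ∑ i, D * (c i / D) := by
    refine (totalDegree_finsetProd _ _).trans (Finset.sum_le_sum fun i _ => ?_)
    refine (totalDegree_pow _ _).trans ?_
    rw [mul_comm]; exact Nat.mul_le_mul_right _ (hF i)
  have h2 : (∏ i, (X i : MvPolynomial (Fin m) R) ^ (c i % D)).totalDegree ≤ ∑ i, c i % D := by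
    refine (totalDegree_finsetProd _ _).trans (Finset.sum_le_sum fun i _ => ?_)
    rw [totalDegree_X_pow]
  calc _ ≤ ∑ i, D * (c i / D) + ∑ i, c i % D := add_le_add h1 h2
    _ = ∑ i, c i := by
      rw [← Finset.sum_add_distrib]; simp only [Nat.div_add_mod]

theorem phiMon_map {R S : Type*} [CommRing R] [CommRing S] (f : R →+* S) {m : ℕ}
    (F : Fin m → MvPolynomial (Fin m) R)
    (D : ℕ) (c : Fin m →₀ ℕ) :
    map f (phiMon F D c) = phiMon (fun i => map f (F i)) D c := by
  unfold phiMon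
  simp

/-- The linear endomorphism. -/
noncomputable def Phi {m : ℕ} (F : Fin m → MvPolynomial (Fin m) ℝ)
    (D : ℕ) : MvPolynomial (Fin m) ℝ →ₗ[ℝ] MvPolynomial (Fin m) ℝ :=
  (basisMonomials (Fin m) ℝ).constr ℝ (phiMon F D)

theorem Phi_monomial {m : ℕ} (F : Fin m → MvPolynomial (Fin m) ℝ)
    (D : ℕ) (c : Fin m →₀ ℕ) (a : ℝ) : Phi F D (monomial c a) = a • phiMon F D c := by
  have : Phi F D (monomial c 1) = phiMon F D c := by
    have := (basisMonomials (Fin m) ℝ).constr_basis ℝ (phiMon F D) c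
    simpa [Phi] using this
  rw [← this, ← map_smul, smul_monomial]; simp

theorem Phi_mul {m : ℕ} (F : Fin m → MvPolynomial (Fin m) ℝ)
    (D : ℕ) (hD : 0 < D) (i : Fin m) (p : MvPolynomial (Fin m) ℝ) :
    Phi F D (X i ^ D * p) = F i * Phi F D p := by
  induction p using MvPolynomial.induction_on' with
  | monomial c a =>
    rw [X_pow_eq_monomial, monomial_mul, one_mul, Phi_monomial, Phi_monomial,
      phiMon_add F D hD, mul_smul_comm]
  | add p q h1 h2 => rw [mul_add, map_add, map_add, mul_add, h1, h2]

/-- finite index set -/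
abbrev Idx (m t : ℕ) := {c : Fin m →₀ ℕ // ∑ i, c i ≤ t}

instance (m t : ℕ) : Finite (Idx m t) := by
  apply Set.Finite.to_subtype
  apply Set.Finite.subset (Set.finite_Iic (Finsupp.equivFunOnFinite.symm (fun _ : Fin m => t)))
  intro c hc i
  exact (Finset.single_le_sum (f := fun i => c i) (fun _ _ => Nat.zero_le _) (Finset.mem_univ i)).trans hc

noncomputable instance (m t : ℕ) : Fintype (Idx m t) := Fintype.ofFinite _

/-- coefficient matrix -/
noncomputable def mat {R : Type*} [CommRing R] {m : ℕ} (F : Fin m → MvPolynomial (Fin m) R)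
    (D t : ℕ) : Matrix (Idx m t) (Idx m t) R := fun c c' => coeff c'.1 (phiMon F D c.1)

theorem mat_map {R S : Type*} [CommRing R] [CommRing S] (f : R →+* S) {m : ℕ}
    (F : Fin m → MvPolynomial (Fin m) R) (D t : ℕ) :
    (mat F D t).map f = mat (fun i => map f (F i)) D t := by
  ext c c'
  simp [mat, ← phiMon_map, coeff_map]

theorem exists_good {m : ℕ} (q : Fin m → MvPolynomial (Fin m) ℝ) (D : ℕ) (B : ℝ) :
    ∃ η : ℝ, B ≤ η ∧ ∀ t, IsUnit (mat (fun i => X i ^ D + C η * q i) D t) := by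
  classical
  let F : Fin m → MvPolynomial (Fin m) (Polynomial ℝ) :=
    fun i => X i ^ D + C Polynomial.X * map Polynomial.C (q i)
  have hF : ∀ η : ℝ, (fun i => map (Polynomial.evalRingHom η) (F i))
      = fun i => X i ^ D + C η * q i := by
    intro η
    funext i
    simp only [F, map_add, map_mul, map_pow, map_X, map_C]
    have : (Polynomial.evalRingHom η).comp Polynomial.C = RingHom.id ℝ := by ext; simp
    rw [MvPolynomial.map_map, this, MvPolynomial.map_id]; simp
  have hdet : ∀ t η, (mat F D t).det.eval η = (mat (fun i => X i ^ D + C η * q i) D t).det := by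
    intro t η
    rw [← hF, ← mat_map, ← RingHom.mapMatrix_apply, ← RingHom.map_det]; simp
  have hne : ∀ t, (mat F D t).det ≠ 0 := by
    intro t h
    have := hdet t 0
    rw [h] at this
    have h1 : mat (fun i => X i ^ D + C (0:ℝ) * q i) D t = 1 := by
      ext c c'
      simp only [mat, map_zero, zero_mul, add_zero, phiMon_id, coeff_monomial, Matrix.one_apply]
      simp [Subtype.ext_iff]
    rw [h1] at this
    simp at this
  have hc : (⋃ t, {η : ℝ | (mat F D t).det.IsRoot η}).Countable := by
    apply Set.countable_iUnion
    intro t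
    exact (Polynomial.finite_setOfPred_isRoot (hne t)).countable
  have hnot : ¬ (Set.Ici B).Countable := by
    intro h
    have h2 := Cardinal.mk_Ici_real B
    have h3 := Cardinal.le_aleph0_iff_set_countable.mpr h
    rw [h2] at h3
    exact absurd h3 (not_le.mpr Cardinal.aleph0_lt_continuum)
  obtain ⟨η, h1, h2⟩ : ∃ η ∈ Set.Ici B, η ∉ (⋃ t, {η : ℝ | (mat F D t).det.IsRoot η}) := by
    by_contra hcon
    push Not at hcon
    exact hnot (hc.mono hcon)
  refine ⟨η, h1, fun t => ?_⟩
  rw [Matrix.isUnit_iff_isUnit_det, isUnit_iff_ne_zero, ← hdet]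
  intro h
  exact h2 (Set.mem_iUnion.mpr ⟨t, h⟩)

theorem Phi_sum {m : ℕ} (F : Fin m → MvPolynomial (Fin m) ℝ) (D t : ℕ) (hF : ∀ i, (F i).totalDegree ≤ D)
    (w : Idx m t → ℝ) (c' : Fin m →₀ ℕ) :
    coeff c' (Phi F D (∑ c, monomial c.1 (w c))) =
      if h : ∑ i, c' i ≤ t then (Matrix.vecMul w (mat F D t)) ⟨c', h⟩ else 0 := by
  simp only [map_sum, Phi_monomial, coeff_sum, coeff_smul, smul_eq_mul]
  split_ifs with h
  · rfl
  · apply Finset.sum_eq_zero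
    intro c _
    rw [coeff_eq_zero_of_totalDegree_lt, mul_zero]
    have := phiMon_totalDegree F D hF c.1
    have h3 : ∑ i ∈ c'.support, c' i = ∑ i, c' i :=
      Finset.sum_subset (Finset.subset_univ _) (by simp)
    rw [h3]
    have := c.2
    omega

theorem eq_sum {m : ℕ} (p : MvPolynomial (Fin m) ℝ) :
    ∃ t, (∀ c : Fin m →₀ ℕ, ¬ (∑ i, c i ≤ t) → coeff c p = 0) ∧
      p = ∑ c : Idx m t, monomial c.1 (coeff c.1 p) := by
  have h0 : ∀ c : Fin m →₀ ℕ, ¬ (∑ i, c i ≤ p.totalDegree) → coeff c p = 0 := by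
    intro c hc
    apply coeff_eq_zero_of_totalDegree_lt
    have h3 : ∑ i ∈ c.support, c i = ∑ i, c i :=
      Finset.sum_subset (Finset.subset_univ _) (by simp)
    rw [h3]; omega
  refine ⟨p.totalDegree, h0, ?_⟩
  ext c'
  simp only [coeff_sum, coeff_monomial]
  by_cases h : ∑ i, c' i ≤ p.totalDegree
  · rw [Finset.sum_eq_single (⟨c', h⟩ : Idx m p.totalDegree)]
    · simp
    · intro b _ hb
      rw [if_neg]
      intro hh; exact hb (Subtype.ext hh)
    · simp
  · rw [h0 _ h, eq_comm]
    apply Finset.sum_eq_zero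
    intro b _
    rw [if_neg]
    rintro rfl
    exact h b.2

theorem Phi_bij {m : ℕ} (F : Fin m → MvPolynomial (Fin m) ℝ) (D : ℕ) (hF : ∀ i, (F i).totalDegree ≤ D)
    (hu : ∀ t, IsUnit (mat F D t)) : Function.Bijective (Phi F D) := by
  classical
  constructor
  · rw [injective_iff_map_eq_zero]
    intro p hp
    obtain ⟨t, h0, ht⟩ := eq_sum p
    have hinj := Matrix.vecMul_injective_iff_isUnit.mpr (hu t)
    have : (fun c : Idx m t => coeff c.1 p) = 0 := by
      apply hinj
      funext c'
      have := Phi_sum F D t hF (fun c : Idx m t => coeff c.1 p) c'.1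
      rw [← ht, hp, dif_pos c'.2] at this
      simpa using this.symm
    rw [ht]
    apply Finset.sum_eq_zero
    intro c _
    rw [show coeff c.1 p = 0 from congrFun this c]; simp
  · intro p
    obtain ⟨t, h0, ht⟩ := eq_sum p
    obtain ⟨w, hw⟩ := Matrix.vecMul_surjective_iff_isUnit.mpr (hu t) (fun c : Idx m t => coeff c.1 p)
    refine ⟨∑ c, monomial c.1 (w c), ?_⟩
    ext c'
    rw [Phi_sum F D t hF]
    split_ifs with h
    · exact congrFun hw ⟨c', h⟩
    · exact (h0 _ h).symm

/-- small coefficients -/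
noncomputable def smallCoeff (m D : ℕ) : MvPolynomial (Fin m) ℝ →ₗ[ℝ] ((Fin m → Fin D) → ℝ) :=
  LinearMap.pi fun a => lcoeff ℝ (Finsupp.equivFunOnFinite.symm (fun i => (a i : ℕ)))

theorem smallCoeff_surj (m D : ℕ) : Function.Surjective (smallCoeff m D) := by
  classical
  intro w
  refine ⟨∑ a, monomial (Finsupp.equivFunOnFinite.symm (fun i => (a i : ℕ))) (w a), ?_⟩
  funext b
  simp only [smallCoeff, LinearMap.pi_apply, lcoeff_apply, coeff_sum, coeff_monomial]
  rw [Finset.sum_eq_single b]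
  · simp
  · intro a _ hab
    rw [if_neg]
    intro h
    apply hab
    funext i
    have := congrFun (Finsupp.equivFunOnFinite.symm.injective h) i
    exact Fin.ext this
  · simp

theorem smallCoeff_ker (m D : ℕ) (p : MvPolynomial (Fin m) ℝ) :
    smallCoeff m D p = 0 ↔ p ∈ Ideal.span (Set.range fun i : Fin m => (X i ^ D : MvPolynomial (Fin m) ℝ)) := by
  have : (Set.range fun i : Fin m => (X i ^ D : MvPolynomial (Fin m) ℝ))
      = (fun s => monomial s (1:ℝ)) '' (Set.range fun i : Fin m => Finsupp.single i D) := by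
    rw [← Set.range_comp]
    congr 1
    funext i
    simp [X_pow_eq_monomial]
  rw [this, mem_ideal_span_monomial_image]
  constructor
  · intro h c hc
    by_contra hcon
    push Not at hcon
    have hlt : ∀ i, c i < D := by
      intro i
      have := hcon (Finsupp.single i D) ⟨i, rfl⟩
      rw [Finsupp.single_le_iff] at this
      omega
    have h1 := congrFun h (fun i => ⟨c i, hlt i⟩)
    simp only [smallCoeff, LinearMap.pi_apply, lcoeff_apply] at h1
    rw [mem_support_iff] at hc
    apply hc
    have h2 : (Finsupp.equivFunOnFinite.symm fun i => c i) = c := by ext i; simp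
    rw [h2] at h1
    exact h1
  · intro h
    funext a
    simp only [smallCoeff, LinearMap.pi_apply, lcoeff_apply, Pi.zero_apply]
    by_contra hcon
    obtain ⟨s, ⟨i, rfl⟩, hs⟩ := h _ (mem_support_iff.mpr hcon)
    rw [Finsupp.single_le_iff] at hs
    simp at hs
    have := (a i).2
    omega

theorem exists_zero {m : ℕ} (F : Fin m → MvPolynomial (Fin m) ℝ) (D : ℕ) (hD : Odd D)
    (hF : ∀ i, (F i).totalDegree ≤ D)
    (hu : ∀ t, IsUnit (mat F D t)) : ∃ x : Fin m → ℝ, ∀ i, eval x (F i) = 0 := by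
  let e := LinearEquiv.ofBijective (Phi F D) (Phi_bij F D hF hu)
  let I := Ideal.span (Set.range F)
  let π : MvPolynomial (Fin m) ℝ →ₗ[ℝ] ((Fin m → Fin D) → ℝ) :=
    (smallCoeff m D).comp (e.symm : MvPolynomial (Fin m) ℝ →ₗ[ℝ] MvPolynomial (Fin m) ℝ)
  have hπs : Function.Surjective π := (smallCoeff_surj m D).comp e.symm.surjective
  have hker : LinearMap.ker π = I.restrictScalars ℝ := by
    ext p
    obtain ⟨p, rfl⟩ := e.surjective p
    simp only [π, LinearMap.mem_ker, LinearMap.comp_apply, LinearEquiv.coe_coe,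
      LinearEquiv.symm_apply_apply, Submodule.restrictScalars_mem, smallCoeff_ker, I,
      Ideal.mem_span_range_iff_exists_fun]
    constructor
    · rintro ⟨c, rfl⟩
      refine ⟨fun i => Phi F D (c i), ?_⟩
      change _ = Phi F D _
      rw [map_sum]
      refine Finset.sum_congr rfl fun i _ => ?_
      rw [mul_comm (c i), Phi_mul F D hD.pos, mul_comm]
    · rintro ⟨c, hc⟩
      refine ⟨fun i => e.symm (c i), ?_⟩
      apply e.injective
      rw [← hc]
      change Phi F D _ = _
      rw [map_sum]
      refine Finset.sum_congr rfl fun i _ => ?_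
      rw [mul_comm, Phi_mul F D hD.pos, mul_comm]
      congr 1
      exact e.apply_symm_apply (c i)
  let E : (MvPolynomial (Fin m) ℝ ⧸ I) ≃ₗ[ℝ] ((Fin m → Fin D) → ℝ) :=
    (Submodule.Quotient.restrictScalarsEquiv ℝ I).symm ≪≫ₗ
      Submodule.quotEquivOfEq _ _ hker.symm ≪≫ₗ π.quotKerEquivOfSurjective hπs
  have hfd : FiniteDimensional ℝ (MvPolynomial (Fin m) ℝ ⧸ I) := LinearEquiv.finiteDimensional E.symm
  have hfr : Module.finrank ℝ (MvPolynomial (Fin m) ℝ ⧸ I) = D ^ m := by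
    rw [E.finrank_eq]; simp
  obtain ⟨ψ⟩ := exists_algHom_of_odd (A := MvPolynomial (Fin m) ℝ ⧸ I) (D ^ m)
    (MvPolynomial (Fin m) ℝ ⧸ I) hfr hD.pow
  let χ : MvPolynomial (Fin m) ℝ →ₐ[ℝ] ℝ := ψ.comp (Ideal.Quotient.mkₐ ℝ I)
  refine ⟨fun i => χ (X i), fun i => ?_⟩
  have h1 : χ = aeval (fun i => χ (X i)) := by
    apply MvPolynomial.algHom_ext; intro i; simp
  have h2 : χ (F i) = 0 := by
    have : Ideal.Quotient.mkₐ ℝ I (F i) = 0 :=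
      Ideal.Quotient.eq_zero_iff_mem.mpr (Ideal.subset_span ⟨i, rfl⟩)
    simp only [χ, AlgHom.comp_apply]
    rw [this, map_zero]
  rw [h1] at h2
  rw [← h2]
  rfl

end BU

namespace BU
open MvPolynomial

theorem homog (m : ℕ) (p : MvPolynomial (Fin (m+1)) ℝ) : ∃ N : ℕ, ∀ D, Odd D → N ≤ D →
    ∃ q : MvPolynomial (Fin m) ℝ, q.totalDegree ≤ D ∧ ∀ (x : Fin m → ℝ) (s : ℝ), 0 < s →
      s ^ 2 = 1 + ∑ i, x i ^ 2 →
      eval x q = s ^ D * ((eval (s⁻¹ • (Fin.cons 1 x : Fin (m+1) → ℝ)) p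
        - eval (-(s⁻¹ • (Fin.cons 1 x : Fin (m+1) → ℝ))) p) / 2) := by
  induction p using MvPolynomial.induction_on' with
  | monomial c a =>
    refine ⟨∑ j, c j, fun D hD hN => ?_⟩
    have hev : ∀ (t : ℝ) (z : Fin (m+1) → ℝ), eval (t • z) (monomial c a)
        = t ^ (∑ j, c j) * (a * ∏ j, z j ^ c j) := by
      intro t z
      rw [eval_monomial, Finsupp.prod_fintype _ _ (by simp)]
      simp only [Pi.smul_apply, smul_eq_mul, mul_pow, Finset.prod_mul_distrib,
        Finset.prod_pow_eq_pow_sum]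
      ring
    have hneg : ∀ (t : ℝ) (z : Fin (m+1) → ℝ), -(t • z) = (-t) • z := by
      intro t z; simp
    rcases Nat.even_or_odd (∑ j, c j) with he | ho
    · refine ⟨0, by simp, fun x s hs hx => ?_⟩
      rw [hneg, hev, hev, he.neg_pow]; simp
    · obtain ⟨e, he⟩ : ∃ e, D = ∑ j, c j + 2 * e := by
        rcases hD with ⟨u, hu⟩
        rcases ho with ⟨v, hv⟩
        exact ⟨u - v, by omega⟩
      let Z : Fin (m+1) → MvPolynomial (Fin m) ℝ := Fin.cons 1 X
      refine ⟨C a * (∏ j, Z j ^ c j) * (1 + ∑ i, X i ^ 2) ^ e, ?_, fun x s hs hx => ?_⟩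
      · have hZ : ∀ j, (Z j).totalDegree ≤ 1 := by
          intro j
          refine Fin.cases ?_ (fun i => ?_) j
          · simp [Z]
          · simp [Z]
        have h1 : (∏ j, Z j ^ c j).totalDegree ≤ ∑ j, c j := by
          refine (totalDegree_finsetProd _ _).trans (Finset.sum_le_sum fun i _ => ?_)
          refine (totalDegree_pow _ _).trans ?_
          calc _ ≤ c i * 1 := Nat.mul_le_mul_left _ (hZ i)
            _ = c i := by simp
        have h2 : (1 + ∑ i : Fin m, (X i : MvPolynomial (Fin m) ℝ) ^ 2).totalDegree ≤ 2 := by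
          refine (totalDegree_add _ _).trans ?_
          apply max_le
          · simp
          · apply totalDegree_finsetSum_le
            intro i _
            rw [totalDegree_X_pow]
        have h3 := totalDegree_pow (1 + ∑ i : Fin m, (X i : MvPolynomial (Fin m) ℝ) ^ 2) e
        have h4 := totalDegree_mul (C a) (∏ j, Z j ^ c j)
        have h5 := totalDegree_mul (C a * (∏ j, Z j ^ c j)) ((1 + ∑ i, X i ^ 2) ^ e)
        have h6 : e * (1 + ∑ i : Fin m, (X i : MvPolynomial (Fin m) ℝ) ^ 2).totalDegree ≤ e * 2 :=
          Nat.mul_le_mul_left _ h2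
        rw [totalDegree_C] at h4
        omega
      · rw [hneg, hev, hev, ho.neg_pow]
        have hz : ∀ j, eval x (Z j) = (Fin.cons 1 x : Fin (m+1) → ℝ) j := by
          intro j
          refine Fin.cases ?_ (fun i => ?_) j <;> simp [Z]
        simp only [map_mul, map_prod, map_pow, map_add, map_sum, eval_C, eval_X, map_one, hz]
        rw [← hx, he, ← pow_mul, pow_add, inv_pow]
        field_simp
        ring
  | add p q h1 h2 =>
    obtain ⟨N1, h1⟩ := h1
    obtain ⟨N2, h2⟩ := h2
    refine ⟨max N1 N2, fun D hD hN => ?_⟩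
    obtain ⟨q1, hq1, e1⟩ := h1 D hD ((le_max_left _ _).trans hN)
    obtain ⟨q2, hq2, e2⟩ := h2 D hD ((le_max_right _ _).trans hN)
    refine ⟨q1 + q2, (totalDegree_add _ _).trans (max_le hq1 hq2), fun x s hs hx => ?_⟩
    rw [map_add, e1 x s hs hx, e2 x s hs hx, map_add, map_add]
    ring

theorem approx {n : ℕ} (K : Set (Fin n → ℝ)) (hK : IsCompact K) (f : (Fin n → ℝ) → ℝ)
    (hf : Continuous f) (ε : ℝ) (hε : 0 < ε) :
    ∃ p : MvPolynomial (Fin n) ℝ, ∀ z ∈ K, |eval z p - f z| < ε := by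
  let coord : Fin n → C(Fin n → ℝ, ℝ) := fun i => ⟨fun z => z i, continuous_apply i⟩
  let Ψ : MvPolynomial (Fin n) ℝ →ₐ[ℝ] C(Fin n → ℝ, ℝ) := aeval coord
  have hΨ : ∀ p z, Ψ p z = eval z p := by
    intro p z
    induction p using MvPolynomial.induction_on with
    | C a => simp [Ψ]
    | add p q hp hq => simp [hp, hq]
    | mul_X p i hp => 
      rw [map_mul, ContinuousMap.mul_apply, hp]; simp [Ψ, coord]
  have hsep : Ψ.range.SeparatesPoints := by
    intro x y hxy
    obtain ⟨i, hi⟩ := Function.ne_iff.mp hxy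
    exact ⟨fun z => Ψ (X i) z, ⟨Ψ (X i), ⟨X i, rfl⟩, rfl⟩, by simpa [hΨ] using hi⟩
  obtain ⟨g, ⟨p, rfl⟩, hg⟩ :=
    ContinuousMap.exists_mem_subalgebra_near_continuous_of_isCompact_of_separatesPoints hsep
      ⟨f, hf⟩ hK hε
  refine ⟨p, fun z hz => ?_⟩
  have := hg z hz
  rw [Real.norm_eq_abs] at this
  rw [← hΨ]
  exact this

/-- **Borsuk-Ulam**. -/
theorem borsuk_ulam (m : ℕ) (g : (Fin (m+1) → ℝ) → (Fin m → ℝ)) (hg : Continuous g)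
    (hodd : ∀ z, g (-z) = - g z) : ∃ z, z ≠ 0 ∧ g z = 0 := by
  by_contra hcon
  push Not at hcon
  let K : Set (Fin (m+1) → ℝ) := {z | ∑ i, z i ^ 2 = 1}
  have hKne : ∀ z ∈ K, z ≠ 0 := by
    rintro z hz rfl
    simp [K] at hz
  have hKcl : IsClosed K := isClosed_eq (by fun_prop) continuous_const
  have hK : IsCompact K := by
    apply Metric.isCompact_of_isClosed_isBounded hKcl
    refine (Metric.isBounded_iff_subset_closedBall 0).mpr ⟨1, fun z hz => ?_⟩
    rw [mem_closedBall_zero_iff, pi_norm_le_iff_of_nonneg zero_le_one]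
    intro i
    have : z i ^ 2 ≤ 1 := by
      rw [← show ∑ i, z i ^ 2 = 1 from hz]
      exact Finset.single_le_sum (f := fun i => z i ^ 2) (fun _ _ => sq_nonneg _) (Finset.mem_univ i)
    rw [Real.norm_eq_abs]
    exact (sq_le_one_iff_abs_le_one _).mp this
  have hKnonempty : K.Nonempty := ⟨Pi.single 0 1, by
    simp only [K, Set.mem_ofPred_eq]
    rw [Finset.sum_eq_single 0]
    · simp
    · intro b _ hb; simp [hb]
    · simp⟩
  obtain ⟨z0, hz0, hmin⟩ := hK.exists_isMinOn hKnonempty (f := fun z => ‖g z‖)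
    (by fun_prop)
  set δ := ‖g z0‖ with hδ
  have hδpos : 0 < δ := norm_pos_iff.mpr (hcon z0 (hKne z0 hz0))
  have hmin' : ∀ z ∈ K, δ ≤ ‖g z‖ := fun z hz => hmin hz
  choose p hp using fun i : Fin m => approx K hK (fun z => g z i) (by fun_prop) (δ/2) (by positivity)
  choose N hN using fun i : Fin m => homog m (p i)
  let D := 2 * (∑ i, N i) + 1
  have hD : Odd D := ⟨_, rfl⟩
  have hND : ∀ i, N i ≤ D := by
    intro i
    have := Finset.single_le_sum (f := N) (fun _ _ => Nat.zero_le _) (Finset.mem_univ i)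
    omega
  choose q hqd hq using fun i => hN i D hD (hND i)
  obtain ⟨η, hη, hu⟩ := exists_good q D (2/δ + 1)
  have hηpos : 0 < η := lt_of_lt_of_le (by positivity) hη
  obtain ⟨x, hx⟩ := exists_zero (fun i => X i ^ D + C η * q i) D hD (by
    intro i
    refine (totalDegree_add _ _).trans (max_le ?_ ?_)
    · rw [totalDegree_X_pow]
    · refine (totalDegree_mul _ _).trans ?_
      rw [totalDegree_C, zero_add]; exact hqd i) hu
  let s := Real.sqrt (1 + ∑ i, x i ^ 2)
  have hsum : 0 ≤ ∑ i, x i ^ 2 := Finset.sum_nonneg fun _ _ => sq_nonneg _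
  have hs : 0 < s := Real.sqrt_pos.mpr (by linarith)
  have hs2 : s ^ 2 = 1 + ∑ i, x i ^ 2 := Real.sq_sqrt (by linarith)
  set w : Fin (m+1) → ℝ := s⁻¹ • (Fin.cons 1 x : Fin (m+1) → ℝ) with hw
  have hwK : w ∈ K := by
    simp only [K, Set.mem_ofPred_eq, hw, Pi.smul_apply, smul_eq_mul, mul_pow, ← Finset.mul_sum]
    rw [Fin.sum_univ_succ]
    simp only [Fin.cons_zero, Fin.cons_succ, one_pow]
    rw [← hs2]; field_simp
  have hwK' : -w ∈ K := by
    simpa [K] using hwK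
  have hlt : ‖g w‖ < δ := by
    rw [pi_norm_lt_iff hδpos]
    intro i
    rw [Real.norm_eq_abs]
    have h1 := hp i w hwK
    have h2 := hp i (-w) hwK'
    have h3 := hx i
    simp only [map_add, map_pow, eval_X, map_mul, eval_C] at h3
    rw [hq i x s hs hs2, ← hw] at h3
    rw [hodd] at h2
    set P := (eval w (p i) - eval (-w) (p i)) / 2 with hP
    have hxs : |x i| ≤ s := by
      apply abs_le_of_sq_le_sq _ hs.le
      have := Finset.single_le_sum (f := fun i => x i ^ 2) (fun _ _ => sq_nonneg _) (Finset.mem_univ i)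
      linarith
    have h4 : |P| ≤ 1 / η := by
      have h5 : η * s ^ D * |P| = |x i| ^ D := by
        have : η * (s ^ D * P) = - x i ^ D := by linarith
        rw [← abs_pow, ← abs_neg (x i ^ D), ← this, abs_mul, abs_mul, abs_of_pos hηpos,
          abs_of_pos (pow_pos hs D)]
        ring
      have h6 : |x i| ^ D ≤ s ^ D := pow_le_pow_left₀ (abs_nonneg _) hxs D
      rw [le_div_iff₀ hηpos]
      have h7 : 0 < s ^ D := pow_pos hs D
      by_contra hc
      push Not at hc
      nlinarith
    have h5 : 1 / η < δ / 2 := by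
      rw [div_lt_div_iff₀ hηpos two_pos]
      have : 2 / δ < η := by linarith
      rw [div_lt_iff₀ hδpos] at this
      linarith
    rw [abs_lt] at h1 h2 ⊢
    rw [abs_le] at h4
    simp only [Pi.neg_apply] at h2
    constructor <;> linarith [h1.1, h1.2, h2.1, h2.2, h4.1, h4.2]
  exact absurd (hmin' w hwK) (not_le.mpr hlt)

end BU

namespace BU

/-- **Topological Radon theorem**. -/
theorem radon (d : ℕ) (F : (Fin (d+2) → ℝ) → (Fin d → ℝ)) (hF : Continuous F) :
    ∃ x y : Fin (d+2) → ℝ, (∀ i, 0 ≤ x i) ∧ ∑ i, x i = 1 ∧ (∀ i, 0 ≤ y i) ∧ ∑ i, y i = 1 ∧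
      (∀ i, x i = 0 ∨ y i = 0) ∧ F x = F y := by
  let s : (Fin (d+2) → ℝ) → ℝ := fun z => ∑ i, |z i| / 2
  let P : (Fin (d+2) → ℝ) → (Fin (d+2) → ℝ) := fun z i => max (z i) 0
  have hs : Continuous s := by fun_prop
  have hP : Continuous P := by fun_prop
  have hs0 : ∀ z, 0 ≤ s z := fun z => Finset.sum_nonneg fun _ _ => by positivity
  have hsneg : ∀ z, s (-z) = s z := fun z => by simp [s]
  have hzi : ∀ z i, |z i| / 2 ≤ s z := fun z i =>
    Finset.single_le_sum (f := fun i => |z i| / 2) (fun _ _ => by positivity) (Finset.mem_univ i)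
  have hspos : ∀ z, z ≠ 0 → 0 < s z := by
    intro z hz
    obtain ⟨i, hi⟩ := Function.ne_iff.mp hz
    have : 0 < |z i| := abs_pos.mpr hi
    have := hzi z i
    linarith
  let H : (Fin (d+2) → ℝ) → (Fin d → ℝ) := fun z =>
    s z • (F ((s z)⁻¹ • P z) - F ((s z)⁻¹ • P (-z)))
  obtain ⟨M, hM⟩ := (isCompact_closedBall (0 : Fin (d+2) → ℝ) 2).exists_bound_of_continuousOn
    hF.continuousOn
  have hball : ∀ z, (s z)⁻¹ • P z ∈ Metric.closedBall (0 : Fin (d+2) → ℝ) 2 := by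
    intro z
    rw [mem_closedBall_zero_iff, pi_norm_le_iff_of_nonneg zero_le_two]
    intro i
    simp only [P, Pi.smul_apply, smul_eq_mul, Real.norm_eq_abs, abs_mul, abs_inv]
    rw [abs_of_nonneg (hs0 z), abs_of_nonneg (le_max_right _ _)]
    rcases (hs0 z).eq_or_lt with h | h
    · rw [← h]; simp
    · rw [inv_mul_le_iff₀ h]
      have := hzi z i
      apply max_le
      · linarith [le_abs_self (z i)]
      · linarith
  have hHc : Continuous H := by
    rw [continuous_iff_continuousAt]
    intro z
    by_cases hz : z = 0
    · subst hz
      have hH0 : H 0 = 0 := by simp [H, s]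
      unfold ContinuousAt
      rw [hH0]
      have hb : ∀ z, ‖H z‖ ≤ s z * (M + M) := by
        intro z
        simp only [H]
        rw [norm_smul, Real.norm_eq_abs, abs_of_nonneg (hs0 z)]
        apply mul_le_mul_of_nonneg_left _ (hs0 z)
        refine (norm_sub_le _ _).trans (add_le_add (hM _ (hball z)) ?_)
        have := hball (-z)
        rw [hsneg] at this
        exact hM _ this
      apply squeeze_zero_norm hb
      have : Continuous fun z => s z * (M + M) := by fun_prop
      have h2 := this.tendsto 0
      have h3 : s 0 * (M + M) = 0 := by simp [s]
      rwa [h3] at h2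
    · have hne : s z ≠ 0 := (hspos z hz).ne'
      have h1 : ContinuousAt (fun z => (s z)⁻¹) z := hs.continuousAt.inv₀ hne
      have h2 : ContinuousAt (fun z => (s z)⁻¹ • P z) z := h1.smul hP.continuousAt
      have h3 : ContinuousAt (fun z => (s z)⁻¹ • P (-z)) z :=
        h1.smul (hP.comp continuous_neg).continuousAt
      exact hs.continuousAt.smul
        ((hF.continuousAt.comp h2).sub (hF.continuousAt.comp h3))
  obtain ⟨z, hz, hg⟩ := borsuk_ulam (d+1) (fun z => Fin.cons (∑ i, z i) (H z))
    (by
      apply continuous_pi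
      intro j
      refine Fin.cases ?_ (fun i => ?_) j
      · simp only [Fin.cons_zero]; fun_prop
      · simp only [Fin.cons_succ]; fun_prop)
    (by
      intro z
      funext j
      refine Fin.cases ?_ (fun i => ?_) j
      · simp
      · simp only [Fin.cons_succ, Pi.neg_apply, H, hsneg, neg_neg, Pi.smul_apply, Pi.sub_apply,
          smul_eq_mul]
        ring)
  have hsz := hspos z hz
  have hz0 : ∑ i, z i = 0 := by simpa using congrFun hg 0
  have hH : H z = 0 := by
    funext i
    simpa using congrFun hg i.succ
  have hsum : ∀ z : Fin (d+2) → ℝ, ∑ i, z i = 0 → ∑ i, P z i = s z := by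
    intro z hz0
    have : ∀ i, P z i = |z i| / 2 + z i / 2 := by
      intro i
      simp only [P]
      rcases le_total (z i) 0 with h | h
      · rw [max_eq_right h, abs_of_nonpos h]; ring
      · rw [max_eq_left h, abs_of_nonneg h]; ring
    simp only [this, Finset.sum_add_distrib, ← Finset.sum_div, hz0, s]
    simp
  refine ⟨(s z)⁻¹ • P z, (s z)⁻¹ • P (-z), fun i => ?_, ?_, fun i => ?_, ?_, fun i => ?_, ?_⟩
  · exact mul_nonneg (inv_nonneg.mpr hsz.le) (le_max_right _ _)
  · simp only [Pi.smul_apply, smul_eq_mul, ← Finset.mul_sum]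
    rw [hsum z hz0, inv_mul_cancel₀ hsz.ne']
  · exact mul_nonneg (inv_nonneg.mpr hsz.le) (le_max_right _ _)
  · simp only [Pi.smul_apply, smul_eq_mul, ← Finset.mul_sum]
    rw [hsum (-z) (by simp [hz0]), hsneg, inv_mul_cancel₀ hsz.ne']
  · rcases le_total (z i) 0 with h | h
    · left; simp [P, h]
    · right; simp [P, h]
  · simp only [H] at hH
    have hsz0 : s z ≠ 0 := hsz.ne'
    exact sub_eq_zero.mp ((smul_eq_zero.mp hH).resolve_left hsz0)

/-- The constraint method: no injective map on a suitable closed subset. -/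
theorem no_inj (n : ℕ) (κ : Set (Fin (n+1+2) → ℝ)) (hκ : IsClosed κ)
    (hpair : ∀ x y : Fin (n+1+2) → ℝ, (∀ i, 0 ≤ x i) → ∑ i, x i = 1 → (∀ i, 0 ≤ y i) →
      ∑ i, y i = 1 → (∀ i, x i = 0 ∨ y i = 0) → x ∈ κ ∨ y ∈ κ)
    (ψ : κ → (Fin n → ℝ)) (hψ : Continuous ψ) (hinj : Function.Injective ψ) : False := by
  obtain ⟨G, hG⟩ := ContinuousMap.exists_restrict_eq hκ (⟨ψ, hψ⟩ : C(κ, Fin n → ℝ))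
  have hG' : ∀ x (hx : x ∈ κ), G x = ψ ⟨x, hx⟩ := fun x hx =>
    congrArg (fun f : C(κ, Fin n → ℝ) => f ⟨x, hx⟩) hG
  obtain ⟨x, y, hx0, hx1, hy0, hy1, hxy, hF⟩ := radon (n+1)
    (fun x => Fin.cons (Metric.infDist x κ) (G x)) (by
      apply continuous_pi
      intro j
      refine Fin.cases ?_ (fun i => ?_) j
      · simp only [Fin.cons_zero]; exact Metric.continuous_infDist_pt κ
      · simp only [Fin.cons_succ]; fun_prop)
  have h0 : Metric.infDist x κ = Metric.infDist y κ := by simpa using congrFun hF 0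
  have h1 : G x = G y := by
    funext i
    simpa using congrFun hF i.succ
  have hor := hpair x y hx0 hx1 hy0 hy1 hxy
  have hne : κ.Nonempty := by
    rcases hor with h | h
    · exact ⟨x, h⟩
    · exact ⟨y, h⟩
  have hboth : x ∈ κ ∧ y ∈ κ := by
    rcases hor with h | h
    · refine ⟨h, ?_⟩
      rw [hκ.mem_iff_infDist_zero hne] at h ⊢
      rw [← h0, h]
    · refine ⟨?_, h⟩
      rw [hκ.mem_iff_infDist_zero hne] at h ⊢
      rw [h0, h]
  rw [hG' x hboth.1, hG' y hboth.2] at h1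
  have hxy' : x = y := congrArg Subtype.val (hinj h1)
  subst hxy'
  have : ∑ i, x i = 0 := Finset.sum_eq_zero fun i _ => by simpa using hxy i
  rw [this] at hx1
  exact zero_ne_one hx1

end BU

/-- Let `Δ` be a simplicial complex embeddable in the
sphere `S^{d-1}` (e.g. a simplicial `(d-1)`-sphere) and `r ≤ d/2`. Then
`dim Δ(d-r) ≤ d`; equivalently, `Δ(d-r)` contains no face of cardinality
`d+2`. -/
theorem skc_dim_le_of_embeddable
    {V : Type*} [Fintype V] [DecidableEq V]
    (Δ : Set (Finset V)) (hΔ : IsComplex Δ) (d r : ℕ)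
    (hr1 : 1 ≤ r) (hr2 : 2 * r ≤ d)
    (hemb : ∃ φ : ↥(realization Δ) → EuclideanSpace ℝ (Fin d),
      Continuous φ ∧ Function.Injective φ ∧ ∀ x, ‖φ x‖ = 1) :
    ∀ F ∈ skc Δ (d - r), F.card ≤ d + 1 := by
  intro F hF
  by_contra hcard
  push Not at hcard
  obtain ⟨n, rfl⟩ : ∃ n, d = n + 1 := ⟨d - 1, by omega⟩
  obtain ⟨φ, hφc, hφi, hφn⟩ := hemb
  -- vertices
  obtain ⟨e, he⟩ : ∃ e : Fin (n+1+2) ↪ V, ∀ i, e i ∈ F := by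
    obtain ⟨F', hF', hc⟩ := Finset.exists_subset_card_eq (show n + 1 + 2 ≤ F.card by omega)
    let e0 := (Finset.equivFinOfCardEq hc).symm
    exact ⟨e0.toEmbedding.trans (Function.Embedding.subtype _), fun i => hF' (e0 i).2⟩
  obtain ⟨k, hk⟩ : ∃ k, k = n + 1 - r := ⟨_, rfl⟩
  rw [← hk] at hF
  obtain ⟨A0, -, hA0⟩ := Finset.exists_subset_card_eq
    (show k + 1 ≤ (Finset.univ : Finset (Fin (n+1+2))).card by simp; omega)
  let j : (Fin (n+1+2) → ℝ) → V → ℝ := fun x v => ∑ i, if e i = v then x i else 0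
  have hjc : Continuous j := by
    apply continuous_pi
    intro v
    apply continuous_finsetSum
    intro i _
    split_ifs <;> fun_prop
  have hje : ∀ x i, j x (e i) = x i := by
    intro x i
    simp [j]
  have hji : Function.Injective j := by
    intro x y h
    funext i
    rw [← hje x, ← hje y, h]
  have hjr : ∀ x : Fin (n+1+2) → ℝ, (∀ i, 0 ≤ x i) → ∑ i, x i = 1 →
      (∃ A : Finset (Fin (n+1+2)), A.card ≤ k + 1 ∧ ∀ i, i ∉ A → x i = 0) →
      j x ∈ realization Δ := by
    rintro x hx0 hx1 ⟨A, hA, hAx⟩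
    refine ⟨fun v => Finset.sum_nonneg fun i _ => ?_, ?_, A.map e, ?_, ?_⟩
    · split_ifs
      · exact hx0 i
      · exact le_rfl
    · simp only [j]
      rw [Finset.sum_comm]
      simpa using hx1
    · apply hF
      · intro v hv
        obtain ⟨i, -, rfl⟩ := Finset.mem_map.mp hv
        exact he i
      · rwa [Finset.card_map]
    · intro v hv
      obtain ⟨i, -, hi⟩ := Finset.exists_ne_zero_of_sum_ne_zero hv
      by_cases hiv : e i = v
      · rw [if_pos hiv] at hi
        rw [← hiv]
        apply Finset.mem_map_of_mem
        by_contra hc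
        exact hi (hAx i hc)
      · rw [if_neg hiv] at hi; exact absurd rfl hi
  -- removed point
  let p : Fin (n+1+2) → ℝ := fun i => if i ∈ A0 then ((k:ℝ) + 1)⁻¹ else 0
  have hk1 : (0:ℝ) < (k:ℝ) + 1 := by positivity
  have hp : j p ∈ realization Δ := by
    apply hjr
    · intro i; simp only [p]; split_ifs
      · positivity
      · exact le_rfl
    · simp only [p]
      rw [Finset.sum_ite_mem, Finset.univ_inter, Finset.sum_const, hA0]
      simp only [nsmul_eq_mul, Nat.cast_add, Nat.cast_one]
      exact mul_inv_cancel₀ hk1.ne'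
    · exact ⟨A0, hA0.le, fun i hi => by simp [p, hi]⟩
  let κ : Set (Fin (n+1+2) → ℝ) := ⋃ A ∈ {A : Finset (Fin (n+1+2)) | A.card ≤ k + 1 ∧ A ≠ A0},
    {x | (∀ i, 0 ≤ x i) ∧ ∑ i, x i = 1 ∧ ∀ i, i ∉ A → x i = 0}
  have hκmem : ∀ x, x ∈ κ ↔ ∃ A : Finset (Fin (n+1+2)), (A.card ≤ k + 1 ∧ A ≠ A0) ∧
      (∀ i, 0 ≤ x i) ∧ ∑ i, x i = 1 ∧ ∀ i, i ∉ A → x i = 0 := by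
    intro x
    simp only [κ, Set.mem_iUnion, exists_prop]
    rfl
  have hκ : IsClosed κ := by
    apply Set.Finite.isClosed_biUnion (Set.toFinite _)
    intro A _
    have h1 : IsClosed {x : Fin (n+1+2) → ℝ | ∀ i, 0 ≤ x i} := by
      rw [Set.ofPred_forall]
      exact isClosed_iInter fun i => isClosed_le continuous_const (continuous_apply i)
    have h2 : IsClosed {x : Fin (n+1+2) → ℝ | ∑ i, x i = 1} :=
      isClosed_eq (by fun_prop) continuous_const
    have h3 : IsClosed {x : Fin (n+1+2) → ℝ | ∀ i, i ∉ A → x i = 0} := by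
      simp only [Set.ofPred_forall]
      exact isClosed_iInter fun i => isClosed_iInter fun _ =>
        isClosed_eq (continuous_apply i) continuous_const
    exact h1.inter (h2.inter h3)
  have hκr : ∀ x ∈ κ, j x ∈ realization Δ := by
    intro x hx
    obtain ⟨A, hA, h0, h1, h2⟩ := (hκmem x).mp hx
    exact hjr x h0 h1 ⟨A, hA.1, h2⟩
  have hpκ : p ∉ κ := by
    intro h
    obtain ⟨A, hA, h0, h1, h2⟩ := (hκmem p).mp h
    have hsub : A0 ⊆ A := by
      intro i hi
      by_contra hc
      have := h2 i hc
      simp only [p, if_pos hi] at this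
      exact (inv_pos.mpr hk1).ne' this
    exact hA.2 (Finset.eq_of_subset_of_card_le hsub (by omega)).symm
  -- stereographic projection
  have hfact : Fact (Module.finrank ℝ (EuclideanSpace ℝ (Fin (n+1))) = n + 1) := ⟨by simp⟩
  let Φ : κ → Metric.sphere (0 : EuclideanSpace ℝ (Fin (n+1))) 1 := fun x =>
    ⟨φ ⟨j x.1, hκr x.1 x.2⟩, by simpa using hφn _⟩
  have hΦc : Continuous Φ := by
    apply Continuous.subtype_mk
    apply hφc.comp
    apply Continuous.subtype_mk
    exact hjc.comp continuous_subtype_val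
  have hΦi : Function.Injective Φ := by
    intro x y h
    have h1 := hφi (congrArg Subtype.val h)
    exact Subtype.ext (hji (congrArg Subtype.val h1))
  let v : Metric.sphere (0 : EuclideanSpace ℝ (Fin (n+1))) 1 := ⟨φ ⟨j p, hp⟩, by simpa using hφn _⟩
  have hΦv : ∀ x, Φ x ∈ (stereographic' n v).source := by
    intro x
    rw [stereographic'_source]
    intro h
    have h1 := hφi (congrArg Subtype.val (Set.mem_singleton_iff.mp h))
    have h2 : x.1 = p := hji (congrArg Subtype.val h1)
    exact hpκ (h2 ▸ x.2)
  refine BU.no_inj n κ hκ ?_ (fun x => WithLp.ofLp (stereographic' n v (Φ x))) ?_ ?_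
  · intro x y hx0 hx1 hy0 hy1 hxy
    let A : Finset (Fin (n+1+2)) := Finset.univ.filter fun i => x i ≠ 0
    let B : Finset (Fin (n+1+2)) := Finset.univ.filter fun i => y i ≠ 0
    have hAx : ∀ i, i ∉ A → x i = 0 := fun i hi => by simpa [A] using hi
    have hBy : ∀ i, i ∉ B → y i = 0 := fun i hi => by simpa [B] using hi
    have hdis : Disjoint A B := by
      rw [Finset.disjoint_left]
      intro i hi hi'
      simp only [A, B, Finset.mem_filter, Finset.mem_univ, true_and] at hi hi'
      exact (hxy i).elim hi hi'
    have hcardAB : A.card + B.card ≤ n + 1 + 2 := by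
      rw [← Finset.card_union_of_disjoint hdis]
      simpa using Finset.card_le_univ (A ∪ B)
    by_cases hA : A.card ≤ k + 1 ∧ A ≠ A0
    · exact Or.inl ((hκmem x).mpr ⟨A, hA, hx0, hx1, hAx⟩)
    · right
      refine (hκmem y).mpr ⟨B, ?_, hy0, hy1, hBy⟩
      have hA' : k + 1 < A.card ∨ A = A0 := by
        by_contra hc
        push Not at hc
        exact hA ⟨hc.1, hc.2⟩
      rcases hA' with h | h
      · refine ⟨by omega, fun hB => ?_⟩
        rw [hB, hA0] at hcardAB
        omega
      · have hAc : A.card = k + 1 := by rw [h, hA0]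
        refine ⟨by omega, fun hB => ?_⟩
        rw [h, hB, disjoint_self] at hdis
        rw [hdis] at hA0
        simp at hA0
  · have h1 : Continuous fun x => stereographic' n v (Φ x) :=
      (stereographic' n v).continuousOn.comp_continuous hΦc hΦv
    exact (PiLp.continuous_ofLp 2 _).comp h1
  · intro x y h
    have h1 := WithLp.ofLp_injective 2 h
    exact hΦi ((stereographic' n v).injOn (hΦv x) (hΦv y) h1)
end
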